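/- There exists a universal constant C₂ such that the following holds. Let r ∈ [1, ∞), let (F, ‖·‖) be a finite-dimensional real normed space, let i : F → ℓ_r be an injective bounded linear map with bounded inverse on its image, and set λ := ‖i‖_{F→ℓ_r} · ‖i^{-1}‖_{i(F)→F}. Then for every log-concave random vector X with values in F and every p ≥ 1, (E‖X‖^p)^{1/p} ≤ C₂·r·λ·(E‖X‖ + sup{(E|φ(X)|^p)^{1/p} : φ ∈ F*, ‖φ‖_* ≤ 1}). -/

import Mathlib

/-!
Transporting the law `μ` of `X` to `ℓ_r` costs the distortion, so the point is to bound the `p`-th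
moment of `Q x = (∑ |φ j x| ^ r) ^ (1 / r)`, where the `φ j` are the coordinates of the embedding,
by `C r A`. Here `A` bounds the mean of `Q` and the `p`-th moment norms of the functionals dominated
by `Q` (`MomentData.moment`).

*Quantiles.* Let `B` be convex with `μ B ≥ 3 ^ (-k)`, where `k` is of order `p`, and let `m j` be an
upper quantile of `|φ j|` on `B`. Then `(∑ m j ^ r) ^ (1 / r) ≤ C A` (`MomentData.sum_median`). By
Hölder's inequality this reduces to a weighted `ℓ₁` norm `N` of mean at most a constant, and to the
statement that any set `S` of mass at least `18 ^ (-k)` has a point `y` such that the unit-order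
`N`-ball around `y` has mass at least `c ^ k` (`LCMeas.exists_center`). It is proved by averaging:
the functionals `x ↦ ∑ (g i / u i) x i`, with `u i` and `g i` independent and uniform, are small with
probability bounded below when the `ℓ₁` norm of `x` is at most `1`, and with small probability when it
is large (`ratio_lower`, `ratio_upper`). With `k` independent such functionals, log-concavity
gives many close pairs among independent points of `S` (`LCMeas.collision`), and Tonelli's theorem
turns this into many pairs of points close in the `ℓ₁` norm. At the resulting centre `y`, the
functional with the signs of the `φ j y` is large on the whole ball, and Markov's inequality for its
`p`-th moment bounds the quantiles.

*Sampling.* By Borell's lemma on `B`, the tails of each `φ j` on `B` decay exponentially at the scale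
`m j`, which produces the factor `r` when the dyadic sums for `|φ j| ^ r` are taken with the square
roots of the masses (`LCMeas.tsum_sqrt_tail`). Thus the weighted family of half-spaces
`H = {±φ j ≥ 2 ^ i}` satisfies `∑ c_H √(μ (B ∩ H)) ≤ R √(μ B)`, with `R = (C r A) ^ r`, for all convex
`B` of mass at least `3 ^ (-k)`. Replacing `B` by `B ∩ H` keeps it convex, and iterating the bound
shows that `∑ c_H 1_H`, which dominates `Q ^ r`, exceeds `2 R` with probability at most `3 ^ (-k / 2)`
(`sampling`).

*Conclusion.* So `Q` exceeds a level `M` of order `r A` with probability at most `27 ^ (-p)`, and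
Borell's lemma for `Q` itself gives tails `2 ^ (-p t)` at level `t M`; integration yields the moment
bound. If `‖X‖ ^ p` is not integrable, the left-hand side of the theorem is `0` by convention.
-/

open MeasureTheory
open scoped Pointwise ENNReal ProbabilityTheory Classical

/-- A measure on a real topological vector space is log-concave if
`μ(λK + (1−λ)L) ≥ μ(K)^λ μ(L)^{1−λ}` for all compact nonempty `K, L` and `λ ∈ [0,1]`. -/
def IsLogConcave {E : Type*} [AddCommGroup E] [Module ℝ E] [TopologicalSpace E]
    [MeasurableSpace E] (μ : Measure E) : Prop :=
  ∀ K L : Set E, K.Nonempty → L.Nonempty → IsCompact K → IsCompact L →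
    ∀ l : ℝ, 0 ≤ l → l ≤ 1 →
      μ K ^ l * μ L ^ (1 - l) ≤ μ (l • K + (1 - l) • L)

/-! ### Log-concave measures, Borell's lemma and quantiles -/

/-- Log-concavity in a form that needs no topology: the inequality is required for measurable
sets `A`, `B` and any measurable `C` containing the combination `l A + (1 - l) B`. -/
def LCMeas {E : Type*} [AddCommGroup E] [Module ℝ E] [MeasurableSpace E] (μ : Measure E) : Prop :=
  ∀ l : ℝ, 0 < l → l < 1 → ∀ A B C : Set E, MeasurableSet A → MeasurableSet B →
    MeasurableSet C → (∀ a ∈ A, ∀ b ∈ B, l • a + (1 - l) • b ∈ C) →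
      μ A ^ l * μ B ^ (1 - l) ≤ μ C

/-- Inner regularity, with the nonempty compact set that `IsLogConcave` asks for. -/
lemma exists_compact_rpow_gt {F : Type*} [NormedAddCommGroup F] [NormedSpace ℝ F]
    [MeasurableSpace F] [BorelSpace F] [FiniteDimensional ℝ F] {μ : Measure F} [IsFiniteMeasure μ]
    {A : Set F} (hA : MeasurableSet A) {l : ℝ} (hl : 0 < l) {a : ℝ≥0∞} (ha : a < μ A ^ l) :
    ∃ K ⊆ A, IsCompact K ∧ K.Nonempty ∧ a < μ K ^ l := by
  have h1 : a ^ (1 / l) < μ A := by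
    have := ENNReal.rpow_lt_rpow ha (one_div_pos.2 hl)
    rwa [← ENNReal.rpow_mul, mul_one_div_cancel hl.ne', ENNReal.rpow_one] at this
  have : ProperSpace F := FiniteDimensional.proper_real F
  obtain ⟨K, hKA, hK, h⟩ := hA.exists_lt_isCompact h1
  refine ⟨K, hKA, hK, ?_, ?_⟩
  · by_contra hne
    rw [Set.not_nonempty_iff_eq_empty] at hne
    simp [hne] at h
  · have := ENNReal.rpow_lt_rpow h hl
    rwa [← ENNReal.rpow_mul, one_div_mul_cancel hl.ne', ENNReal.rpow_one] at this

lemma IsLogConcave.lcMeas {F : Type*} [NormedAddCommGroup F] [NormedSpace ℝ F]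
    [MeasurableSpace F] [BorelSpace F] [FiniteDimensional ℝ F] {μ : Measure F} [IsFiniteMeasure μ]
    (h : IsLogConcave μ) : LCMeas μ := by
  intro l hl0 hl1 A B C hA hB hC hABC
  refine ENNReal.mul_le_of_forall_lt fun a ha b hb => ?_
  obtain ⟨K, hKA, hK, hKn, haK⟩ := exists_compact_rpow_gt hA hl0 ha
  obtain ⟨L, hLB, hL, hLn, hbL⟩ := exists_compact_rpow_gt hB (sub_pos.2 hl1) hb
  refine (mul_le_mul' haK.le hbL.le).trans ((h K L hKn hLn hK hL l hl0.le hl1.le).trans ?_)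
  refine measure_mono ?_
  rintro _ ⟨_, ⟨x, hx, rfl⟩, _, ⟨y, hy, rfl⟩, rfl⟩
  exact hABC x (hKA hx) y (hLB hy)

section
variable {E : Type*} [AddCommGroup E] [Module ℝ E] [MeasurableSpace E] {μ : Measure E}

/-- Log-concavity passes to the restriction to a convex set. -/
lemma LCMeas.restrict (h : LCMeas μ) {B : Set E} (hB : MeasurableSet B) (hc : Convex ℝ B) :
    LCMeas (μ.restrict B) := by
  intro l hl0 hl1 A A' C hA hA' hC hAC
  rw [Measure.restrict_apply hA, Measure.restrict_apply hA', Measure.restrict_apply hC]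
  refine h l hl0 hl1 _ _ _ (hA.inter hB) (hA'.inter hB) (hC.inter hB) ?_
  intro a ha b hb
  exact ⟨hAC a ha.1 b hb.1, hc ha.2 hb.2 hl0.le (by linarith) (by ring)⟩

/-- Borell's lemma: once a level of a norm-like function carries most of the mass, the tail
decays exponentially beyond it. -/
lemma LCMeas.borell [IsFiniteMeasure μ] (h : LCMeas μ) {N : E → ℝ} (hN : Measurable N)
    (hN' : ∀ l : ℝ, 0 < l → l < 1 → ∀ x y, l * N x - (1 - l) * N y ≤ N (l • x + (1 - l) • y))
    {m : ℝ} (hm : 0 ≤ m) {β : ℝ≥0∞} (hβ : μ {x | m < N x} ≤ β * μ {x | N x ≤ m})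
    {t : ℝ} (ht : 1 ≤ t) :
    μ {x | t * m < N x} ≤ β ^ ((t + 1) / 2) * μ {x | N x ≤ m} := by
  have hsub : μ {x | t * m < N x} ≤ μ {x | m < N x} :=
    measure_mono fun x (hx : t * m < N x) => lt_of_le_of_lt (by nlinarith) hx
  rcases ht.eq_or_lt with rfl | ht
  · simpa using hsub.trans hβ
  set a := μ {x | N x ≤ m} with ha
  by_cases ha0 : a = 0
  · rw [ha0, mul_zero] at hβ ⊢
    exact hsub.trans hβ
  have hat : a ≠ ∞ := measure_ne_top _ _
  set l : ℝ := 2 / (t + 1) with hl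
  have hl0 : 0 < l := by positivity
  have hl1 : l < 1 := by rw [hl, div_lt_one (by linarith)]; linarith
  have key := h l hl0 hl1 {x | t * m < N x} {x | N x ≤ m} {x | m < N x}
    (measurableSet_lt measurable_const hN) (measurableSet_le hN measurable_const)
    (measurableSet_lt measurable_const hN) (by
      intro x hx y hy
      have hx' : t * m < N x := hx
      have hy' : N y ≤ m := hy
      have h1 := hN' l hl0 hl1 x y
      have h2 : l * (t * m) - (1 - l) * m = m := by
        rw [hl]; field_simp; ring
      show m < N _
      have h3 : l * (t * m) < l * N x := mul_lt_mul_of_pos_left hx' hl0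
      have h4 : (1 - l) * N y ≤ (1 - l) * m := mul_le_mul_of_nonneg_left hy' (by linarith)
      linarith)
  have h5 : μ {x | t * m < N x} ^ l ≤ β * a ^ l := by
    have h6 : a ^ (1 - l) ≠ 0 := by simp [ENNReal.rpow_eq_zero_iff, ha0, hat]
    have h7 : a ^ (1 - l) ≠ ∞ := ENNReal.rpow_ne_top_of_nonneg (by linarith) hat
    rw [← ENNReal.mul_le_mul_iff_left h6 h7]
    refine key.trans (hβ.trans_eq ?_)
    rw [mul_assoc, ← ENNReal.rpow_add _ _ ha0 hat]
    simp
  have h8 := ENNReal.rpow_le_rpow h5 (z := 1 / l) (by positivity)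
  rw [ENNReal.mul_rpow_of_nonneg _ _ (by positivity), ← ENNReal.rpow_mul, ← ENNReal.rpow_mul,
    mul_one_div_cancel hl0.ne', ENNReal.rpow_one, ENNReal.rpow_one] at h8
  convert h8 using 3
  rw [hl]; field_simp

end

/-- A level `m` exceeded strictly on at most a third of the mass and weakly on at least a third. -/
lemma exists_quantile {E : Type*} [MeasurableSpace E] (ν : Measure E) [IsFiniteMeasure ν]
    {f : E → ℝ} (hf : Measurable f)
    (hf0 : ∀ x, 0 ≤ f x) :
    ∃ m : ℝ, 0 ≤ m ∧ ν {x | m < f x} ≤ ν Set.univ / 3 ∧ ν Set.univ / 3 ≤ ν {x | m ≤ f x} := by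
  by_cases hV : ν Set.univ = 0
  · have : ν = 0 := by simpa using hV
    exact ⟨0, le_rfl, by simp [this], by simp [this]⟩
  set V := ν Set.univ with hVdef
  have hV3 : 0 < V / 3 := ENNReal.div_pos hV (by simp)
  set S : Set ℝ := {m | 0 ≤ m ∧ ν {x | m < f x} ≤ V / 3} with hS
  have hSb : BddBelow S := ⟨0, fun x hx => hx.1⟩
  have hSn : S.Nonempty := by
    have ht : Filter.Tendsto (fun n : ℕ => ν {x | (n : ℝ) < f x}) Filter.atTop (nhds 0) := by
      have := tendsto_measure_iInter_atTop (μ := ν) (s := fun n : ℕ => {x | (n : ℝ) < f x})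
        (fun n => (measurableSet_lt measurable_const hf).nullMeasurableSet)
        (fun n m hnm x (hx : (m : ℝ) < f x) => show (n : ℝ) < f x from
          lt_of_le_of_lt (by exact_mod_cast hnm) hx) ⟨0, measure_ne_top _ _⟩
      have he : (⋂ n : ℕ, {x | (n : ℝ) < f x}) = ∅ := by
        ext x
        simp only [Set.mem_iInter, Set.mem_ofPred_eq, Set.mem_empty_iff_false, iff_false, not_forall,
          not_lt]
        exact exists_nat_ge (f x)
      rwa [he, measure_empty] at this
    obtain ⟨n, hn⟩ := (ht.eventually (gt_mem_nhds hV3)).exists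
    exact ⟨n, Nat.cast_nonneg n, hn.le⟩
  refine ⟨sInf S, le_csInf hSn fun x hx => hx.1, ?_, ?_⟩
  · have he : {x | sInf S < f x} = ⋃ n : ℕ, {x | sInf S + 1 / ((n : ℝ) + 1) < f x} := by
      ext x
      simp only [Set.mem_ofPred_eq, Set.mem_iUnion]
      constructor
      · intro hx
        obtain ⟨n, hn⟩ := exists_nat_one_div_lt (sub_pos.2 hx)
        exact ⟨n, by linarith⟩
      · rintro ⟨n, hn⟩
        have : (0 : ℝ) < 1 / ((n : ℝ) + 1) := by positivity
        linarith
    rw [he, Monotone.measure_iUnion]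
    · refine iSup_le fun n => ?_
      obtain ⟨s, hs, hsn⟩ := exists_lt_of_csInf_lt hSn
        (lt_add_of_pos_right (sInf S) (show (0 : ℝ) < 1 / ((n : ℝ) + 1) by positivity))
      exact (measure_mono fun x (hx : _ < f x) => hsn.trans hx).trans hs.2
    · intro n k hnk x (hx : _ < f x)
      show _ < f x
      have : 1 / ((k : ℝ) + 1) ≤ 1 / ((n : ℝ) + 1) := one_div_le_one_div_of_le (by positivity)
        (by have : (n : ℝ) ≤ k := by exact_mod_cast hnk
            linarith)
      linarith
  · rcases (le_csInf hSn fun x hx => hx.1 : 0 ≤ sInf S).eq_or_lt with h0 | h0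
    · rw [← h0]
      have : {x | 0 ≤ f x} = Set.univ := Set.eq_univ_of_forall hf0
      rw [this]
      exact ENNReal.div_le_of_le_mul (by
        nth_rewrite 1 [← mul_one V]; gcongr; norm_num)
    · have he : {x | sInf S ≤ f x} = ⋂ n : ℕ, {x | sInf S - sInf S / ((n : ℝ) + 1) < f x} := by
        ext x
        simp only [Set.mem_ofPred_eq, Set.mem_iInter]
        constructor
        · intro hx n
          have : (0 : ℝ) < sInf S / ((n : ℝ) + 1) := by positivity
          linarith
        · intro hx
          by_contra! hlt
          obtain ⟨n, hn⟩ := exists_nat_one_div_lt (div_pos (sub_pos.2 hlt) h0)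
          have h2 := hx n
          have h3 : sInf S / ((n : ℝ) + 1) < sInf S - f x := by
            rw [lt_div_iff₀ h0] at hn
            rwa [one_div, inv_mul_eq_div] at hn
          linarith
      have ha : Antitone fun n : ℕ => {x | sInf S - sInf S / ((n : ℝ) + 1) < f x} := by
        intro n k hnk x (hx : _ < f x)
        show _ < f x
        have : sInf S / ((k : ℝ) + 1) ≤ sInf S / ((n : ℝ) + 1) :=
          div_le_div_of_nonneg_left h0.le (by positivity)
            (by have : (n : ℝ) ≤ k := by exact_mod_cast hnk
                linarith)
        linarith
      rw [he, ha.measure_iInter (fun n => (measurableSet_lt measurable_const hf).nullMeasurableSet)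
        ⟨0, measure_ne_top _ _⟩]
      refine le_iInf fun n => ?_
      by_contra! hlt
      have hnot : sInf S - sInf S / ((n : ℝ) + 1) ∈ S := by
        refine ⟨?_, hlt.le⟩
        have : sInf S / ((n : ℝ) + 1) ≤ sInf S := div_le_self h0.le (by
          have : (0 : ℝ) ≤ n := Nat.cast_nonneg n
          linarith)
        linarith
      have h4 := csInf_le hSb hnot
      have : (0 : ℝ) < sInf S / ((n : ℝ) + 1) := by positivity
      linarith

/-! ### Random functionals with Cauchy-like ratios -/

/-- The uniform distribution on `(0, 1]`. -/
noncomputable def unifU : Measure ℝ := volume.restrict (Set.Ioc 0 1)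

/-- The uniform distribution on `[-1/2, 1/2]`. -/
noncomputable def unifV : Measure ℝ := volume.restrict (Set.Icc (-1/2) (1/2))

instance : IsProbabilityMeasure unifU := ⟨by simp [unifU]⟩
instance : IsProbabilityMeasure unifV := ⟨by simp [unifV]; norm_num⟩

/-- The law of independent coordinates `(u, g)`, with `u i` uniform on `(0, 1]` and `g i` uniform
on `[-1/2, 1/2]`. The ratios `g i / u i` have Cauchy-like tails. -/
noncomputable def ratioLaw (n : ℕ) : Measure ((Fin n → ℝ) × (Fin n → ℝ)) :=
  (Measure.pi fun _ => unifU).prod (Measure.pi fun _ => unifV)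

instance (n : ℕ) : IsProbabilityMeasure (ratioLaw n) := by unfold ratioLaw; infer_instance

/-- The random functional `x ↦ ∑ (g i / u i) x i`. -/
noncomputable def ratioFun {n : ℕ} (ω : (Fin n → ℝ) × (Fin n → ℝ)) (x : Fin n → ℝ) : ℝ :=
  ∑ i, ω.2 i * (x i / ω.1 i)

lemma measurable_ratioFun {n : ℕ} :
    Measurable fun q : ((Fin n → ℝ) × (Fin n → ℝ)) × (Fin n → ℝ) => ratioFun q.1 q.2 := by
  unfold ratioFun
  fun_prop

/-- If one coefficient exceeds `s` in absolute value, the sum `∑ g j b j` is spread out: conditionally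
on the other coordinates, `g i` has to lie in an interval of length `8 / s`. -/
lemma smallBall {n : ℕ} (b : Fin n → ℝ) (i : Fin n) {s : ℝ} (hs : 0 < s) (hb : s < |b i|) :
    (Measure.pi fun _ : Fin n => unifV) {g | |∑ j, g j * b j| ≤ 4} ≤ ENNReal.ofReal (8 / s) := by
  have hmeas : MeasurableSet {g : Fin n → ℝ | |∑ j, g j * b j| ≤ 4} :=
    measurableSet_le (by fun_prop) measurable_const
  rw [← lintegral_indicator_one hmeas]
  have hc : ENNReal.ofReal (8 / s) =
      ∫⁻ _, ENNReal.ofReal (8 / s) ∂(Measure.pi fun _ : Fin n => unifV) := by simp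
  rw [hc]
  refine lintegral_le_of_lmarginal_le {i} (measurable_one.indicator hmeas) measurable_const ?_
  intro x
  rw [lmarginal_singleton, lmarginal_singleton]
  simp only [lintegral_const, measure_univ, mul_one]
  set c : ℝ := ∑ j ∈ Finset.univ.erase i, x j * b j with hcdef
  have hb0 : b i ≠ 0 := fun h => by simp [h] at hb; linarith
  have hsum : ∀ t, ∑ j, Function.update x i t j * b j = t * b i + c := by
    intro t
    rw [← Finset.add_sum_erase _ _ (Finset.mem_univ i), hcdef]
    congr 1
    · simp
    · refine Finset.sum_congr rfl fun j hj => ?_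
      rw [Function.update_of_ne (Finset.ne_of_mem_erase hj)]
  calc ∫⁻ t, Set.indicator {g : Fin n → ℝ | |∑ j, g j * b j| ≤ 4} (1 : (Fin n → ℝ) → ℝ≥0∞)
        (Function.update x i t) ∂unifV
      ≤ ∫⁻ t, Set.indicator (Metric.closedBall (-c / b i) (4 / s)) (1 : ℝ → ℝ≥0∞) t ∂unifV := by
        refine lintegral_mono fun t => ?_
        by_cases ht : Function.update x i t ∈ {g : Fin n → ℝ | |∑ j, g j * b j| ≤ 4}
        · have ht' : t ∈ Metric.closedBall (-c / b i) (4 / s) := by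
            have h1 : |∑ j, Function.update x i t j * b j| ≤ 4 := ht
            rw [hsum] at h1
            have h2 : t - -c / b i = (t * b i + c) / b i := by field_simp; ring
            rw [Metric.mem_closedBall, Real.dist_eq, h2, abs_div]
            gcongr
          rw [Set.indicator_of_mem ht, Set.indicator_of_mem ht']; rfl
        · rw [Set.indicator_of_notMem ht]; exact zero_le
    _ = unifV (Metric.closedBall (-c / b i) (4 / s)) :=
        lintegral_indicator_one Metric.isClosed_closedBall.measurableSet
    _ ≤ volume (Metric.closedBall (-c / b i) (4 / s)) := Measure.restrict_apply_le _ _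
    _ = ENNReal.ofReal (8 / s) := by rw [Real.volume_closedBall]; congr 1; ring

lemma unifU_le (a : ℝ) : unifU {u | u ≤ a} ≤ ENNReal.ofReal a := by
  rw [unifU, Measure.restrict_apply (s := Set.Ioc 0 1) (t := {u | u ≤ a}) measurableSet_Iic]
  refine (measure_mono (t := Set.Ioc 0 a) fun u hu => ⟨hu.2.1, hu.1⟩).trans ?_
  simp

/-- The bound `1 - a ≤ exp (-a)`, in the form that tensorises. -/
lemma unifU_ge (a : ℝ) : unifU {u | a ≤ u} ≤ ENNReal.ofReal (Real.exp (-a)) := by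
  rw [unifU, Measure.restrict_apply (s := Set.Ioc 0 1) (t := {u | a ≤ u}) measurableSet_Ici]
  refine (measure_mono (t := Set.Icc a 1) fun u hu => ⟨hu.1, hu.2.2⟩).trans ?_
  rw [Real.volume_Icc]
  exact ENNReal.ofReal_le_ofReal (by linarith [Real.add_one_le_exp (-a)])

lemma ae_unifU : ∀ᵐ u ∂unifU, 0 < u ∧ u ≤ 1 := by
  filter_upwards [ae_restrict_mem (μ := volume) measurableSet_Ioc] with u hu using hu

lemma ae_pi_unifU (n : ℕ) : ∀ᵐ u ∂(Measure.pi fun _ : Fin n => unifU), ∀ i, 0 < u i ∧ u i ≤ 1 := by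
  rw [ae_all_iff]
  intro i
  exact (Measure.quasiMeasurePreserving_eval (μ := fun _ : Fin n => unifU) i).ae ae_unifU

/-- The ratios `x i / u i` are unlikely to be all small when `∑ |x i|` is large. -/
lemma ratio_all_small {n : ℕ} (x : Fin n → ℝ) {s : ℝ} (hs : 0 < s) :
    (Measure.pi fun _ : Fin n => unifU) {u | ∀ i, |x i / u i| ≤ s} ≤
      ENNReal.ofReal (Real.exp (-(∑ i, |x i|) / s)) := by
  have h1 : {u : Fin n → ℝ | ∀ i, |x i / u i| ≤ s} ≤ᵐ[Measure.pi fun _ : Fin n => unifU]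
      (Set.pi Set.univ fun i => {u : ℝ | |x i| / s ≤ u}) := by
    filter_upwards [ae_pi_unifU n] with u hu h i _
    have h2 : |x i / u i| ≤ s := h i
    rw [abs_div, abs_of_pos (hu i).1, div_le_iff₀ (hu i).1] at h2
    show |x i| / s ≤ u i
    rw [div_le_iff₀ hs]; linarith
  refine (measure_mono_ae h1).trans ?_
  rw [Measure.pi_pi]
  refine (Finset.prod_le_prod' fun i _ => unifU_ge _).trans_eq ?_
  rw [← ENNReal.ofReal_prod_of_nonneg fun i _ => (Real.exp_pos _).le, ← Real.exp_sum]
  congr 2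
  rw [Finset.sum_neg_distrib, ← Finset.sum_div, neg_div]

/-- The random functional is rarely small at a point of large `ℓ₁` norm. -/
lemma ratio_upper {n : ℕ} (x : Fin n → ℝ) {s : ℝ} (hs : 0 < s) :
    ratioLaw n {ω | |ratioFun ω x| ≤ 4} ≤
      ENNReal.ofReal (8 / s) + ENNReal.ofReal (Real.exp (-(∑ i, |x i|) / s)) := by
  have hm : MeasurableSet {ω : (Fin n → ℝ) × (Fin n → ℝ) | |ratioFun ω x| ≤ 4} := by
    unfold ratioFun
    exact measurableSet_le (by fun_prop) measurable_const
  have hA : MeasurableSet {u : Fin n → ℝ | ∀ i, |x i / u i| ≤ s} := by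
    have : {u : Fin n → ℝ | ∀ i, |x i / u i| ≤ s} = ⋂ i, {u | |x i / u i| ≤ s} := by
      ext; simp
    rw [this]
    exact MeasurableSet.iInter fun i => measurableSet_le (by fun_prop) measurable_const
  rw [ratioLaw, Measure.prod_apply hm]
  calc _ ≤ ∫⁻ u, (ENNReal.ofReal (8 / s) +
        Set.indicator {u : Fin n → ℝ | ∀ i, |x i / u i| ≤ s} (1 : (Fin n → ℝ) → ℝ≥0∞) u)
        ∂(Measure.pi fun _ : Fin n => unifU) := by
        refine lintegral_mono fun u => ?_
        by_cases hu : u ∈ {u : Fin n → ℝ | ∀ i, |x i / u i| ≤ s}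
        · rw [Set.indicator_of_mem hu]
          exact prob_le_one.trans le_add_self
        · rw [Set.indicator_of_notMem hu, add_zero]
          have hu' : ¬ ∀ i, |x i / u i| ≤ s := hu
          push Not at hu'
          obtain ⟨i, hi⟩ := hu'
          exact smallBall (fun j => x j / u j) i hs hi
    _ ≤ _ := by
        rw [lintegral_add_left measurable_const, lintegral_const, measure_univ, mul_one,
          lintegral_indicator_one hA]
        gcongr
        exact ratio_all_small x hs

/-- The part of the second moment of `x / u` coming from `|x / u| < 4`. -/
lemma trunc_second_moment (x : ℝ) :
    ∫⁻ u, ENNReal.ofReal ((if |x / u| < 4 then x / u else 0) ^ 2) ∂unifU ≤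
      ENNReal.ofReal (4 * |x|) := by
  by_cases hx : x = 0
  · simp [hx]
  have hx' : 0 < |x| := abs_pos.2 hx
  have hc : 0 < |x| / 4 := by positivity
  have hint := integrableOn_Ioi_rpow_of_lt (a := -2) (by norm_num) hc
  calc _ ≤ ∫⁻ u, Set.indicator (Set.Ioi (|x| / 4))
        (fun u => ENNReal.ofReal (x ^ 2 * u ^ (-2 : ℝ))) u ∂unifU := by
        refine lintegral_mono_ae ?_
        filter_upwards [ae_unifU] with u hu
        split_ifs with h
        · rw [abs_div, abs_of_pos hu.1, div_lt_iff₀ hu.1] at h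
          rw [Set.indicator_of_mem (show u ∈ Set.Ioi (|x| / 4) by
            rw [Set.mem_Ioi]; linarith)]
          refine ENNReal.ofReal_le_ofReal ?_
          rw [Real.rpow_neg hu.1.le, div_pow, div_eq_mul_inv]
          norm_num
        · simp
    _ ≤ ∫⁻ u, Set.indicator (Set.Ioi (|x| / 4))
        (fun u => ENNReal.ofReal (x ^ 2 * u ^ (-2 : ℝ))) u :=
        lintegral_mono' Measure.restrict_le_self le_rfl
    _ = ENNReal.ofReal (∫ u in Set.Ioi (|x| / 4), x ^ 2 * u ^ (-2 : ℝ)) := by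
        rw [lintegral_indicator measurableSet_Ioi, ofReal_integral_eq_lintegral_ofReal]
        · exact hint.const_mul _
        · filter_upwards [ae_restrict_mem (μ := volume) measurableSet_Ioi] with u hu
          have : 0 < u := hc.trans hu
          show (0 : ℝ) ≤ _
          positivity
    _ = ENNReal.ofReal (4 * |x|) := by
        rw [integral_const_mul, integral_Ioi_rpow_of_lt (by norm_num) hc]
        congr 1
        have : (-2 : ℝ) + 1 = -1 := by norm_num
        rw [this, Real.rpow_neg_one, ← sq_abs]
        field_simp

lemma integral_unifV : ∫ g, g ∂unifV = 0 := by
  rw [unifV, integral_Icc_eq_integral_Ioc, ← intervalIntegral.integral_of_le (by norm_num)]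
  simp; norm_num

lemma ae_unifV : ∀ᵐ g ∂unifV, g ∈ Set.Icc (-(1/2) : ℝ) (1 / 2) := by
  have := ae_restrict_mem (μ := volume) (measurableSet_Icc (a := (-1/2 : ℝ)) (b := 1/2))
  filter_upwards [this] with u hu
  exact ⟨by linarith [hu.1], hu.2⟩

lemma memLp_unifV (c : ℝ) : MemLp (fun g => g * c) 2 unifV := by
  refine MemLp.of_bound (by fun_prop) (1 / 2 * |c|) ?_
  filter_upwards [ae_unifV] with g hg
  rw [norm_mul, Real.norm_eq_abs, Real.norm_eq_abs]
  gcongr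
  exact abs_le.2 hg

/-- Chebyshev's inequality; the uniform law on `[-1/2, 1/2]` has variance at most `1`. -/
lemma chebyshev_unifV {n : ℕ} (b : Fin n → ℝ) :
    (Measure.pi fun _ : Fin n => unifV) {g | 4 < |∑ j, g j * b j|} ≤
      ∑ j, ENNReal.ofReal (b j ^ 2) / 16 := by
  set X : (i : Fin n) → ℝ → ℝ := fun i g => g * b i
  have hX : ∀ i, MemLp (X i) 2 unifV := fun i => memLp_unifV _
  have hvar := ProbabilityTheory.variance_sum_pi hX
  have hXm : MemLp (∑ i, fun ω : Fin n → ℝ => X i (ω i)) 2 (Measure.pi fun _ => unifV) := by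
    refine memLp_finsetSum' _ fun i _ => ?_
    exact (hX i).comp_measurePreserving (measurePreserving_eval (fun _ : Fin n => unifV) i)
  have hmean : ∫ ω, (∑ i, fun ω : Fin n → ℝ => X i (ω i)) ω ∂(Measure.pi fun _ => unifV) = 0 := by
    simp only [Finset.sum_apply]
    rw [integral_finsetSum]
    · refine Finset.sum_eq_zero fun i _ => ?_
      rw [integral_comp_eval (μ := fun _ : Fin n => unifV) (i := i) (f := X i)
        (hX i).aestronglyMeasurable, integral_mul_const, integral_unifV, zero_mul]
    · intro i _
      exact ((hX i).comp_measurePreserving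
        (measurePreserving_eval (fun _ : Fin n => unifV) i)).integrable (by norm_num)
  have := ProbabilityTheory.meas_ge_le_variance_div_sq hXm (c := 4) (by norm_num)
  rw [hmean, hvar] at this
  refine (measure_mono ?_).trans (this.trans ?_)
  · intro g (hg : 4 < |∑ j, g j * b j|)
    simp only [sub_zero, Finset.sum_apply]
    exact hg.le
  · have hv : ∀ i, ProbabilityTheory.variance (X i) unifV ≤ b i ^ 2 := by
      intro i
      refine (ProbabilityTheory.variance_le_expectation_sq (hX i).aestronglyMeasurable).trans ?_
      have : ∫ g, (X i ^ 2) g ∂unifV ≤ ∫ _, b i ^ 2 ∂unifV := by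
        refine integral_mono_ae (hX i).integrable_sq (integrable_const _) ?_
        filter_upwards [ae_unifV] with g hg
        show (g * b i) ^ 2 ≤ _
        rw [mul_pow]
        have : g ^ 2 ≤ 1 := by nlinarith [hg.1, hg.2]
        nlinarith [sq_nonneg (b i)]
      simpa using this
    have h16 : ∑ j, ENNReal.ofReal (b j ^ 2) / 16 =
        ENNReal.ofReal ((∑ j, b j ^ 2) / 16) := by
      rw [ENNReal.ofReal_div_of_pos (by norm_num),
        ENNReal.ofReal_sum_of_nonneg fun i _ => sq_nonneg _]
      simp_rw [div_eq_mul_inv, Finset.sum_mul]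
      norm_num
    rw [h16]
    refine ENNReal.ofReal_le_ofReal ?_
    have : (4 : ℝ) ^ 2 = 16 := by norm_num
    rw [this]
    gcongr with i
    exact hv i

/-- The random functional is often small at a point of small `ℓ₁` norm. -/
lemma ratio_lower {n : ℕ} (x : Fin n → ℝ) (hx : ∑ i, |x i| ≤ 1) :
    1 / 2 ≤ ratioLaw n {ω | |ratioFun ω x| ≤ 4} := by
  have hm : MeasurableSet {ω : (Fin n → ℝ) × (Fin n → ℝ) | |ratioFun ω x| ≤ 4} := by
    unfold ratioFun
    exact measurableSet_le (by fun_prop) measurable_const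
  have hc : ratioLaw n {ω | |ratioFun ω x| ≤ 4}ᶜ ≤ 1 / 2 := by
    have hA : MeasurableSet {u : Fin n → ℝ | ∃ i, 4 ≤ |x i / u i|} := by
      have : {u : Fin n → ℝ | ∃ i, 4 ≤ |x i / u i|} = ⋃ i, {u | 4 ≤ |x i / u i|} := by
        ext; simp
      rw [this]
      exact MeasurableSet.iUnion fun i => measurableSet_le measurable_const (by fun_prop)
    set b : Fin n → ℝ → ℝ := fun i u => if |x i / u| < 4 then x i / u else 0
    have hb : ∀ i, Measurable (b i) := fun i =>
      Measurable.ite (measurableSet_lt (by fun_prop) measurable_const) (by fun_prop)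
        measurable_const
    have hAle : (Measure.pi fun _ : Fin n => unifU) {u : Fin n → ℝ | ∃ i, 4 ≤ |x i / u i|} ≤
        1 / 4 := by
      have : {u : Fin n → ℝ | ∃ i, 4 ≤ |x i / u i|} = ⋃ i, {u | 4 ≤ |x i / u i|} := by
        ext; simp
      rw [this]
      refine (measure_iUnion_fintype_le _ _).trans ?_
      calc _ ≤ ∑ i, ENNReal.ofReal (|x i| / 4) := by
            refine Finset.sum_le_sum fun i _ => ?_
            refine le_trans ?_ (unifU_le (|x i| / 4))
            rw [← (measurePreserving_eval (fun _ : Fin n => unifU) i).measure_preimage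
              (s := {u : ℝ | u ≤ |x i| / 4})
              (measurableSet_le measurable_id measurable_const).nullMeasurableSet]
            refine measure_mono_ae ?_
            filter_upwards [ae_pi_unifU n] with u hu h
            have h2 : 4 ≤ |x i / u i| := h
            rw [abs_div, abs_of_pos (hu i).1, le_div_iff₀ (hu i).1] at h2
            show u i ≤ |x i| / 4
            linarith
        _ ≤ 1 / 4 := by
            rw [← ENNReal.ofReal_sum_of_nonneg fun i _ => by positivity, ← Finset.sum_div]
            refine (ENNReal.ofReal_le_ofReal (div_le_div_of_nonneg_right hx (by norm_num))).trans ?_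
            rw [ENNReal.ofReal_div_of_pos (by norm_num)]; simp
    rw [ratioLaw, Measure.prod_apply hm.compl]
    calc _ ≤ ∫⁻ u, (Set.indicator {u : Fin n → ℝ | ∃ i, 4 ≤ |x i / u i|}
          (1 : (Fin n → ℝ) → ℝ≥0∞) u + ∑ j, ENNReal.ofReal (b j (u j) ^ 2) / 16)
          ∂(Measure.pi fun _ : Fin n => unifU) := by
          refine lintegral_mono fun u => ?_
          by_cases hu : u ∈ {u : Fin n → ℝ | ∃ i, 4 ≤ |x i / u i|}
          · rw [Set.indicator_of_mem hu]
            exact prob_le_one.trans le_self_add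
          · rw [Set.indicator_of_notMem hu, zero_add]
            have hu' : ¬ ∃ i, 4 ≤ |x i / u i| := hu
            push Not at hu'
            refine le_trans (measure_mono ?_) (chebyshev_unifV fun j => b j (u j))
            intro g hg
            have hg' : ¬ |∑ j, g j * (x j / u j)| ≤ 4 := hg
            have h3 : ∀ j, b j (u j) = x j / u j := fun j => if_pos (hu' j)
            show 4 < |∑ j, g j * b j (u j)|
            simp_rw [h3]
            exact not_le.1 hg'
      _ ≤ 1 / 4 + ∑ j, ENNReal.ofReal (4 * |x j|) / 16 := by
          rw [lintegral_add_left (measurable_one.indicator hA), lintegral_indicator_one hA,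
            lintegral_finsetSum _ fun j _ => by fun_prop]
          gcongr with j
          simp_rw [div_eq_mul_inv]
          rw [lintegral_mul_const _ (by fun_prop)]
          gcongr
          refine le_trans (le_of_eq ?_) (trunc_second_moment (x j))
          exact (measurePreserving_eval (fun _ : Fin n => unifU) j).lintegral_comp
            (f := fun u => ENNReal.ofReal (b j u ^ 2)) (by fun_prop)
      _ ≤ 1 / 4 + 1 / 4 := by
          gcongr
          simp_rw [div_eq_mul_inv]
          rw [← Finset.sum_mul, ← ENNReal.ofReal_sum_of_nonneg fun i _ => by positivity,
            ← Finset.mul_sum]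
          refine (mul_le_mul_left (ENNReal.ofReal_le_ofReal
            (mul_le_mul_of_nonneg_left hx (by norm_num))) _).trans ?_
          rw [show (16 : ℝ≥0∞) = 4 * 4 by norm_num, ENNReal.mul_inv (by simp) (by simp), ← mul_assoc]
          rw [mul_one, ENNReal.ofReal_ofNat, ENNReal.mul_inv_cancel (by simp) (by simp)]
      _ = 1 / 2 := by
          rw [show (2 : ℝ≥0∞) = 4 / 2 by
            rw [ENNReal.eq_div_iff (by simp) (by simp)]; norm_num]
          rw [ENNReal.div_add_div_same, one_add_one_eq_two, one_div, ENNReal.inv_div]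
          all_goals simp
  rw [prob_compl_eq_one_sub hm, tsub_le_iff_left] at hc
  have h1 : (1 : ℝ≥0∞) / 2 + 1 / 2 ≤ ratioLaw n {ω | |ratioFun ω x| ≤ 4} + 1 / 2 := by
    rwa [ENNReal.add_halves]
  exact (ENNReal.add_le_add_iff_right (by simp)).1 h1

/-! ### Collisions and the centre of an `ℓ₁` ball -/

section
variable {E : Type*} [AddCommGroup E] [Module ℝ E] [MeasurableSpace E] {μ : Measure E}

/-- The unit cells of `ℤ ^ k` pull back to disjoint sets. -/
lemma tsum_cells_le_one {E : Type*} [MeasurableSpace E] {μ : Measure E} [IsProbabilityMeasure μ]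
    {k : ℕ} {f : E → Fin k → ℝ} (hf : Measurable f) :
    ∑' w : Fin k → ℤ, μ {x | ∀ j, ⌊f x j⌋ = w j} ≤ 1 := by
  refine (tsum_measure_le_measure_univ (μ := μ) (s := fun w : Fin k → ℤ => {x | ∀ j, ⌊f x j⌋ = w j})
    (fun w => MeasurableSet.nullMeasurableSet ?_) ?_).trans_eq measure_univ
  · have : {x | ∀ j, ⌊f x j⌋ = w j} = ⋂ j, (fun x => ⌊f x j⌋) ⁻¹' {w j} := by
      ext; simp
    rw [this]
    refine MeasurableSet.iInter fun j => ?_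
    exact (Int.measurable_floor.comp ((measurable_pi_apply j).comp hf)) (measurableSet_singleton _)
  · intro w w' hne
    refine Disjoint.aedisjoint ?_
    rw [Set.disjoint_left]
    intro x (hx : ∀ j, _) (hx' : ∀ j, _)
    exact hne (funext fun j => (hx j).symm.trans (hx' j))

/-- Hölder's inequality for `q = q ^ (1/3) * q ^ (2/3)` with exponents `3/2` and `3`. -/
lemma sum_pow_three_le {ι : Type*} [Countable ι] (q : ι → ℝ≥0∞) :
    (∑' z, q z) ^ 3 ≤ (∑' z, q z ^ (1 / 2 : ℝ)) ^ 2 * ∑' z, q z ^ 2 := by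
  let : MeasurableSpace ι := ⊤
  have hpq : (3 / 2 : ℝ).HolderConjugate 3 := by
    rw [Real.holderConjugate_iff]; norm_num
  have := ENNReal.lintegral_mul_le_Lp_mul_Lq (Measure.count : Measure ι) hpq
    (f := fun z => (q z ^ (1 / 2 : ℝ)) ^ (2 / 3 : ℝ)) (g := fun z => (q z ^ 2) ^ (1 / 3 : ℝ))
    (by measurability) (by measurability)
  simp only [lintegral_count, Pi.mul_apply, ← ENNReal.rpow_mul] at this
  norm_num at this
  have h1 : ∀ z, q z ^ (1 / 3 : ℝ) * (q z ^ 2) ^ (1 / 3 : ℝ) = q z := by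
    intro z
    rw [← ENNReal.rpow_natCast, ← ENNReal.rpow_mul, ← ENNReal.rpow_add_of_nonneg] <;> norm_num
  simp_rw [h1] at this
  calc (∑' z, q z) ^ 3 ≤ _ := pow_le_pow_left' this 3
    _ = _ := by
      rw [mul_pow, ← ENNReal.rpow_natCast, ← ENNReal.rpow_natCast, ← ENNReal.rpow_mul,
        ← ENNReal.rpow_mul, ← ENNReal.rpow_natCast]
      norm_num

/-- If the central box `[-R, R] ^ k` is not too unlikely for the `ℝ ^ k`-valued map `g`, two independent
points of `S` are not too unlikely to have `g`-images within `R`. For a cell `z` of side `R`,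
log-concavity bounds `μ (g ∈ z) ^ (1/2) * μ (g ∈ [-R, R] ^ k) ^ (1/2)` by the mass of at most `3 ^ k`
cells of side `R / 2`, so the square roots of the cell masses are summable; Hölder's inequality then
bounds the sum of the squares, a collision probability, from below. -/
lemma LCMeas.collision [IsProbabilityMeasure μ] (h : LCMeas μ) {k : ℕ}
    {g : E → Fin k → ℝ} (hg : Measurable g)
    (hlin : ∀ x y, g ((1 / 2 : ℝ) • x + (1 / 2 : ℝ) • y) = (1 / 2 : ℝ) • g x + (1 / 2 : ℝ) • g y)
    {R : ℝ} (hR : 0 < R) {S : Set E} (hS : MeasurableSet S) :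
    μ {x | ∀ j, |g x j| ≤ R} * μ S ^ 3 ≤
      9 ^ k * (μ.prod μ) {q | (q.1 ∈ S ∧ q.2 ∈ S) ∧ ∀ j, |g q.1 j - g q.2 j| ≤ R} := by
  set κ := μ {x | ∀ j, |g x j| ≤ R} with hκ
  by_cases hκ0 : κ = 0
  · simp [hκ0]
  have hgj : ∀ j, Measurable fun x => g x j := fun j => (measurable_pi_apply j).comp hg
  have hfl : Measurable fun x j => g x j / R := measurable_pi_lambda _ fun j => (hgj j).div_const _
  have hfl2 : Measurable fun x j => 2 * g x j / R :=
    measurable_pi_lambda _ fun j => ((hgj j).const_mul _).div_const _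
  set Q : (Fin k → ℤ) → Set E := fun z => {x | ∀ j, ⌊g x j / R⌋ = z j} with hQ
  have hQm : ∀ z, MeasurableSet (Q z) := by
    intro z
    have : Q z = ⋂ j, (fun x => ⌊g x j / R⌋) ⁻¹' {z j} := by
      ext; simp [hQ]
    rw [this]
    refine MeasurableSet.iInter fun j => ?_
    exact (Int.measurable_floor.comp ((hgj j).div_const _)) (measurableSet_singleton _)
  have hQd : Pairwise (Function.onFun Disjoint Q) := by
    intro w w' hne
    rw [Function.onFun, Set.disjoint_left]
    intro x (hx : ∀ j, _) (hx' : ∀ j, _)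
    exact hne (funext fun j => (hx j).symm.trans (hx' j))
  set D : (Fin k → ℤ) → Set E := fun w => {x | ∀ j, ⌊2 * g x j / R⌋ = w j} with hD
  set sh : (Fin k → Fin 3) → (Fin k → ℤ) := fun e j => (e j : ℤ) - 1 with hsh
  have hDsum : ∑' w, μ (D w) ≤ 1 := tsum_cells_le_one hfl2
  -- the midpoint of a cell and the central box meets at most `3 ^ k` cells of half the size
  have hmid : ∀ z, μ (Q z) ^ (1 / 2 : ℝ) * κ ^ (1 / 2 : ℝ) ≤ ∑ e, μ (D (z + sh e)) := by
    intro z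
    have h1 := h (1 / 2) (by norm_num) (by norm_num) (Q z) {x | ∀ j, |g x j| ≤ R}
      (⋃ e, D (z + sh e)) (hQm z)
      (by
        have : {x | ∀ j, |g x j| ≤ R} = ⋂ j, {x | |g x j| ≤ R} := by ext; simp
        rw [this]
        exact MeasurableSet.iInter fun j => measurableSet_le (hgj j).abs measurable_const)
      (by
        refine MeasurableSet.iUnion fun e => ?_
        have : D (z + sh e) = ⋂ j, (fun x => ⌊2 * g x j / R⌋) ⁻¹' {(z + sh e) j} := by
          ext; simp [hD]
        rw [this]
        refine MeasurableSet.iInter fun j => ?_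
        exact (Int.measurable_floor.comp (((hgj j).const_mul _).div_const _))
          (measurableSet_singleton _))
      (by
        intro x hx y hy
        have hx' : ∀ j, ⌊g x j / R⌋ = z j := hx
        have hy' : ∀ j, |g y j| ≤ R := hy
        rw [show (1 : ℝ) - 1 / 2 = 1 / 2 by norm_num]
        have h3 : ∀ j, ∃ e : Fin 3, ⌊2 * g ((1 / 2 : ℝ) • x + (1 / 2 : ℝ) • y) j / R⌋ =
            z j + ((e : ℤ) - 1) := by
          intro j
          have h4 : 2 * g ((1 / 2 : ℝ) • x + (1 / 2 : ℝ) • y) j / R = g x j / R + g y j / R := by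
            rw [hlin]; simp; ring
          rw [h4]
          have h5 := abs_le.1 (hy' j)
          have h6 : -1 ≤ g y j / R := by rw [le_div_iff₀ hR]; linarith
          have h7 : g y j / R ≤ 1 := by rw [div_le_iff₀ hR]; linarith
          have h8 := Int.floor_le (g x j / R)
          have h9 := Int.lt_floor_add_one (g x j / R)
          rw [hx' j] at h8 h9
          have h10 : z j - 1 ≤ ⌊g x j / R + g y j / R⌋ := by
            rw [Int.le_floor]; push_cast; linarith
          have h11 : ⌊g x j / R + g y j / R⌋ < z j + 2 := by
            rw [Int.floor_lt]; push_cast; linarith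
          obtain h | h | h : ⌊g x j / R + g y j / R⌋ = z j - 1 ∨ ⌊g x j / R + g y j / R⌋ = z j ∨
            ⌊g x j / R + g y j / R⌋ = z j + 1 := by omega
          · exact ⟨0, by rw [h]; simp; ring⟩
          · exact ⟨1, by rw [h]; simp⟩
          · exact ⟨2, by rw [h]; simp⟩
        choose e he using h3
        exact Set.mem_iUnion.2 ⟨e, he⟩)
    rw [show (1 : ℝ) - 1 / 2 = 1 / 2 by norm_num] at h1
    exact h1.trans (measure_iUnion_fintype_le _ _)
  have hsqrt : (∑' z, μ (S ∩ Q z) ^ (1 / 2 : ℝ)) * κ ^ (1 / 2 : ℝ) ≤ 3 ^ k := by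
    rw [← ENNReal.tsum_mul_right]
    calc ∑' z, μ (S ∩ Q z) ^ (1 / 2 : ℝ) * κ ^ (1 / 2 : ℝ)
        ≤ ∑' z, ∑ e, μ (D (z + sh e)) := by
          refine ENNReal.tsum_le_tsum fun z => le_trans ?_ (hmid z)
          gcongr
          exact Set.inter_subset_right
      _ = ∑ e, ∑' z, μ (D (z + sh e)) := by
          rw [Summable.tsum_finsetSum fun _ _ => ENNReal.summable]
      _ ≤ ∑ _e : Fin k → Fin 3, 1 := by
          refine Finset.sum_le_sum fun e _ => ?_
          exact ((Equiv.addRight (sh e)).tsum_eq fun z => μ (D z)).trans_le hDsum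
      _ = 3 ^ k := by simp
  have hsum : ∑' z, μ (S ∩ Q z) = μ S := by
    rw [← measure_iUnion (fun z w hzw => (hQd hzw).mono Set.inter_subset_right
      Set.inter_subset_right) (fun z => hS.inter (hQm z)), ← Set.inter_iUnion]
    congr 1
    rw [Set.inter_eq_left]
    intro x _
    exact Set.mem_iUnion.2 ⟨fun j => ⌊g x j / R⌋, fun j => rfl⟩
  have hsq : ∑' z, μ (S ∩ Q z) ^ 2 ≤
      (μ.prod μ) {q | (q.1 ∈ S ∧ q.2 ∈ S) ∧ ∀ j, |g q.1 j - g q.2 j| ≤ R} := by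
    simp_rw [sq, ← Measure.prod_prod]
    rw [← measure_iUnion]
    · refine measure_mono (Set.iUnion_subset fun z => ?_)
      rintro ⟨x, y⟩ ⟨⟨hx, hxz⟩, ⟨hy, hyz⟩⟩
      refine ⟨⟨hx, hy⟩, fun j => ?_⟩
      have h1 : ⌊g x j / R⌋ = ⌊g y j / R⌋ := (hxz j).trans (hyz j).symm
      have h2 := Int.abs_sub_lt_one_of_floor_eq_floor h1
      rw [← sub_div, abs_div, abs_of_pos hR, div_lt_one hR] at h2
      exact h2.le
    · intro z w hzw
      rw [Function.onFun, Set.disjoint_left]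
      rintro ⟨x, y⟩ hx hy
      exact (Set.disjoint_left.1 (hQd hzw)) hx.1.2 hy.1.2
    · exact fun z => (hS.inter (hQm z)).prod (hS.inter (hQm z))
  calc κ * μ S ^ 3 = κ * (∑' z, μ (S ∩ Q z)) ^ 3 := by rw [hsum]
    _ ≤ κ * ((∑' z, μ (S ∩ Q z) ^ (1 / 2 : ℝ)) ^ 2 * ∑' z, μ (S ∩ Q z) ^ 2) := by
        gcongr; exact sum_pow_three_le _
    _ = ((∑' z, μ (S ∩ Q z) ^ (1 / 2 : ℝ)) * κ ^ (1 / 2 : ℝ)) ^ 2 * ∑' z, μ (S ∩ Q z) ^ 2 := by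
        rw [mul_pow, ← ENNReal.rpow_natCast (κ ^ (1 / 2 : ℝ)), ← ENNReal.rpow_mul]
        norm_num
        ring
    _ ≤ (3 ^ k) ^ 2 * _ := mul_le_mul' (pow_le_pow_left' hsqrt 2) hsq
    _ = _ := by rw [← pow_mul, mul_comm k 2, pow_mul]; norm_num

/-- Tonelli's theorem for `k` independent copies of the random functional. -/
lemma average_rows {α : Type*} [MeasurableSpace α] (ν : Measure α) [SFinite ν] (k : ℕ) {n : ℕ}
    {f : α → Fin n → ℝ} (hf : Measurable f) {A : Set α} (hA : MeasurableSet A) :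
    ∫⁻ Γ, ν {a | a ∈ A ∧ ∀ j, |ratioFun (Γ j) (f a)| ≤ 4} ∂(Measure.pi fun _ : Fin k => ratioLaw n)
      = ∫⁻ a in A, ratioLaw n {ω | |ratioFun ω (f a)| ≤ 4} ^ k ∂ν := by
  set M := Measure.pi fun _ : Fin k => ratioLaw n
  have hm : MeasurableSet {w : (Fin k → (Fin n → ℝ) × (Fin n → ℝ)) × α |
      w.2 ∈ A ∧ ∀ j, |ratioFun (w.1 j) (f w.2)| ≤ 4} := by
    refine (measurable_snd hA).inter ?_
    have : {w : (Fin k → (Fin n → ℝ) × (Fin n → ℝ)) × α | ∀ j, |ratioFun (w.1 j) (f w.2)| ≤ 4} =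
      ⋂ j, {w | |ratioFun (w.1 j) (f w.2)| ≤ 4} := by ext; simp
    show MeasurableSet {w : (Fin k → (Fin n → ℝ) × (Fin n → ℝ)) × α |
      ∀ j, |ratioFun (w.1 j) (f w.2)| ≤ 4}
    rw [this]
    refine MeasurableSet.iInter fun j => measurableSet_le ?_ measurable_const
    refine Measurable.abs ?_
    have h1 : Measurable fun w : (Fin k → (Fin n → ℝ) × (Fin n → ℝ)) × α => w.1 j :=
      (measurable_pi_apply j).comp measurable_fst
    exact measurable_ratioFun.comp (h1.prodMk (hf.comp measurable_snd))
  have h1 := Measure.prod_apply (μ := M) (ν := ν) hm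
  rw [Measure.prod_apply_symm hm] at h1
  refine h1.symm.trans ?_
  rw [← lintegral_indicator hA]
  refine lintegral_congr fun a => ?_
  by_cases ha : a ∈ A
  · rw [Set.indicator_of_mem ha]
    have : (fun x => (x, a)) ⁻¹' {w : (Fin k → (Fin n → ℝ) × (Fin n → ℝ)) × α |
      w.2 ∈ A ∧ ∀ j, |ratioFun (w.1 j) (f w.2)| ≤ 4} =
      Set.pi Set.univ fun _ => {ω | |ratioFun ω (f a)| ≤ 4} := by
      ext x; simp [ha]
    rw [this, Measure.pi_pi]
    simp
  · rw [Set.indicator_of_notMem ha]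
    have : (fun x => (x, a)) ⁻¹' {w : (Fin k → (Fin n → ℝ) × (Fin n → ℝ)) × α |
      w.2 ∈ A ∧ ∀ j, |ratioFun (w.1 j) (f w.2)| ≤ 4} = ∅ := by
      ext x; simp [ha]
    rw [this, measure_empty]

/-- Averaging `LCMeas.collision` over independent random functionals. -/
lemma LCMeas.collision_average [IsProbabilityMeasure μ] (h : LCMeas μ) (k : ℕ) {n : ℕ}
    (L : E →ₗ[ℝ] Fin n → ℝ) (hL : Measurable L) {S : Set E} (hS : MeasurableSet S) :
    (∫⁻ x, ratioLaw n {ω | |ratioFun ω (L x)| ≤ 4} ^ k ∂μ) * μ S ^ 3 ≤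
      9 ^ k * ∫⁻ q in S ×ˢ S, ratioLaw n {ω | |ratioFun ω (L q.1 - L q.2)| ≤ 4} ^ k ∂(μ.prod μ) := by
  have h1 := average_rows μ k hL MeasurableSet.univ
  have h2 := average_rows (μ.prod μ) k (f := fun q => L q.1 - L q.2)
    ((hL.comp measurable_fst).sub (hL.comp measurable_snd)) (hS.prod hS)
  rw [Measure.restrict_univ] at h1
  rw [← h1, ← h2, ← lintegral_mul_const' _ _ (by simp [measure_ne_top]),
    ← lintegral_const_mul' _ _ (by simp)]
  refine lintegral_mono fun Γ => ?_
  have := h.collision (g := fun x j => ratioFun (Γ j) (L x)) (by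
      refine measurable_pi_lambda _ fun j => ?_
      exact measurable_ratioFun.comp (measurable_const.prodMk hL)) (by
      intro x y
      ext j
      simp only [map_add, map_smul, ratioFun, Pi.add_apply, Pi.smul_apply, smul_eq_mul,
        Finset.mul_sum, ← Finset.sum_add_distrib]
      refine Finset.sum_congr rfl fun i _ => ?_
      ring) (show (0 : ℝ) < 4 by norm_num) hS
  convert this using 3
  · simp
  · ext q
    have h5 : ∀ j, ratioFun (Γ j) (L q.1 - L q.2) =
        ratioFun (Γ j) (L q.1) - ratioFun (Γ j) (L q.2) := by
      intro j
      simp only [ratioFun, Pi.sub_apply, ← Finset.sum_sub_distrib]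
      refine Finset.sum_congr rfl fun i _ => ?_
      ring
    simp [h5]

/-- If `∑ |L i|` is at most `1` with probability at least `1 / 2`, every set that is not
exponentially small contains the centre of an `ℓ₁` ball of bounded radius with mass at least
exponentially small. -/
lemma LCMeas.exists_center [IsProbabilityMeasure μ] (h : LCMeas μ) {k : ℕ} (hk : 1 ≤ k) {n : ℕ}
    (L : E →ₗ[ℝ] Fin n → ℝ) (hL : Measurable L) (hL1 : 1 / 2 ≤ μ {x | ∑ i, |L x i| ≤ 1})
    {S : Set E} (hS : MeasurableSet S) (hSk : (18⁻¹ : ℝ≥0∞) ^ k ≤ μ S) :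
    ∃ y ∈ S, (839808⁻¹ : ℝ≥0∞) ^ k ≤ μ {x | ∑ i, |L x i - L y i| ≤ 32 * 419904 ^ 2} := by
  set ε : ℝ := 1 / 419904 with hε
  set T : ℝ := 32 * 419904 ^ 2 with hT
  have hLi : ∀ i, Measurable fun x => L x i := fun i => (measurable_pi_apply i).comp hL
  have hNm : Measurable fun x => ∑ i, |L x i| := by fun_prop
  have hsmall : ∀ x : Fin n → ℝ, T < ∑ i, |x i| →
      ratioLaw n {ω | |ratioFun ω x| ≤ 4} ≤ 419904⁻¹ := by
    intro x hx
    refine (ratio_upper x (s := 16 / ε) (by positivity)).trans ?_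
    have h1 : Real.exp (-(∑ i, |x i|) / (16 / ε)) ≤ ε / 2 := by
      have h2 : 2 / ε ≤ (∑ i, |x i|) / (16 / ε) := by
        rw [le_div_iff₀ (by positivity)]
        refine le_trans (le_of_eq ?_) hx.le
        rw [hε, hT]; norm_num
      rw [neg_div, Real.exp_neg, inv_le_comm₀ (Real.exp_pos _) (by positivity), inv_div]
      linarith [Real.add_one_le_exp ((∑ i, |x i|) / (16 / ε))]
    rw [← ENNReal.ofReal_add (by positivity) (Real.exp_pos _).le]
    refine (ENNReal.ofReal_le_ofReal (q := ε) ?_).trans_eq ?_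
    · have : 8 / (16 / ε) = ε / 2 := by rw [hε]; norm_num
      linarith
    · rw [hε, ENNReal.ofReal_div_of_pos (by norm_num)]; simp
  have hlow : (2⁻¹ : ℝ≥0∞) * 2⁻¹ ^ k ≤ ∫⁻ x, ratioLaw n {ω | |ratioFun ω (L x)| ≤ 4} ^ k ∂μ := by
    have hm : MeasurableSet {x | ∑ i, |L x i| ≤ 1} := measurableSet_le hNm measurable_const
    calc (2⁻¹ : ℝ≥0∞) * 2⁻¹ ^ k ≤ 2⁻¹ ^ k * μ {x | ∑ i, |L x i| ≤ 1} := by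
          rw [mul_comm]; gcongr; simpa using hL1
      _ = ∫⁻ x in {x | ∑ i, |L x i| ≤ 1}, 2⁻¹ ^ k ∂μ := by rw [setLIntegral_const]
      _ ≤ ∫⁻ x in {x | ∑ i, |L x i| ≤ 1}, ratioLaw n {ω | |ratioFun ω (L x)| ≤ 4} ^ k ∂μ := by
          refine setLIntegral_mono' hm fun x hx => ?_
          gcongr
          simpa using ratio_lower (L x) hx
      _ ≤ _ := setLIntegral_le_lintegral _ _
  by_contra! hcon
  have hup : ∫⁻ q in S ×ˢ S, ratioLaw n {ω | |ratioFun ω (L q.1 - L q.2)| ≤ 4} ^ k ∂(μ.prod μ) ≤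
      839808⁻¹ ^ k + 419904⁻¹ ^ k := by
    set G : Set (E × E) := {q | ∑ i, |L q.1 i - L q.2 i| ≤ T} with hG
    have hGm : MeasurableSet G := by
      refine measurableSet_le ?_ measurable_const
      refine Finset.measurable_sum _ fun i _ => Measurable.abs ?_
      exact ((hLi i).comp measurable_fst).sub ((hLi i).comp measurable_snd)
    calc _ ≤ ∫⁻ q in S ×ˢ S, (G.indicator 1 q + 419904⁻¹ ^ k) ∂(μ.prod μ) := by
          refine lintegral_mono fun q => ?_
          by_cases hq : q ∈ G
          · rw [Set.indicator_of_mem hq]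
            exact (pow_le_one' prob_le_one k).trans le_self_add
          · rw [Set.indicator_of_notMem hq, zero_add]
            gcongr
            exact hsmall _ (not_le.1 hq)
      _ = (μ.prod μ) (G ∩ S ×ˢ S) + 419904⁻¹ ^ k * (μ.prod μ) (S ×ˢ S) := by
          rw [lintegral_add_left (measurable_one.indicator hGm), lintegral_indicator_one hGm,
            setLIntegral_const, Measure.restrict_apply hGm]
      _ ≤ 839808⁻¹ ^ k + 419904⁻¹ ^ k := by
          refine add_le_add ?_ (mul_le_of_le_one_right' prob_le_one)
          rw [Measure.prod_apply_symm (hGm.inter (hS.prod hS))]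
          calc _ ≤ ∫⁻ _, (839808⁻¹ : ℝ≥0∞) ^ k ∂μ := by
                refine lintegral_mono fun y => ?_
                by_cases hy : y ∈ S
                · refine le_trans (measure_mono ?_) (hcon y hy).le
                  intro x hx
                  exact hx.1
                · refine le_trans (le_of_eq ?_) zero_le
                  convert measure_empty (μ := μ)
                  ext x
                  simp [hy]
            _ = _ := by simp
  have hmain := h.collision_average k L hL hS
  have h3 : (2⁻¹ : ℝ≥0∞) * 2⁻¹ ^ k * (18⁻¹ ^ k) ^ 3 ≤ 9 ^ k * (839808⁻¹ ^ k + 419904⁻¹ ^ k) :=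
    (mul_le_mul' hlow (pow_le_pow_left' hSk 3)).trans (hmain.trans (by gcongr))
  -- the two sides are real numbers and the inequality fails for every `k ≥ 1`
  have h4 : (2⁻¹ : ℝ) * 2⁻¹ ^ k * (18⁻¹ ^ k) ^ 3 ≤ 9 ^ k * (839808⁻¹ ^ k + 419904⁻¹ ^ k) := by
    have := ENNReal.toReal_mono (by finiteness) h3
    simpa [ENNReal.toReal_add, ENNReal.toReal_mul] using this
  have h5 : (11664⁻¹ : ℝ) ^ k = 2⁻¹ ^ k * (18⁻¹ ^ k) ^ 3 := by
    rw [← pow_mul, mul_comm k 3, pow_mul, ← mul_pow]; norm_num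
  have h6 : (9 : ℝ) ^ k * 839808⁻¹ ^ k = 11664⁻¹ ^ k * 8⁻¹ ^ k := by
    rw [← mul_pow, ← mul_pow]; norm_num
  have h7 : (9 : ℝ) ^ k * 419904⁻¹ ^ k = 11664⁻¹ ^ k * 4⁻¹ ^ k := by
    rw [← mul_pow, ← mul_pow]; norm_num
  rw [mul_assoc, ← h5, mul_add, h6, h7] at h4
  have h8 : (8⁻¹ : ℝ) ^ k ≤ 8⁻¹ ^ 1 := pow_le_pow_of_le_one (by norm_num) (by norm_num) hk
  have h9 : (4⁻¹ : ℝ) ^ k ≤ 4⁻¹ ^ 1 := pow_le_pow_of_le_one (by norm_num) (by norm_num) hk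
  have h10 : (0 : ℝ) < 11664⁻¹ ^ k := by positivity
  nlinarith
end

/-! ### The `ℓ_r` norm of the coordinatewise quantiles -/

section
variable {E : Type*} [AddCommGroup E] [Module ℝ E] [MeasurableSpace E]

/-- The data of a log-concave probability measure `μ` and an `ℓ_r` norm
`Q = (∑ |φ j| ^ r) ^ (1 / r)`, where `A` bounds the mean of `Q` as well as the `p`-th moments of
the linear functionals dominated by `Q`. -/
structure MomentData (μ : Measure E) (φ : ℕ → E →ₗ[ℝ] ℝ) (Q : E → ℝ) (r p A : ℝ) : Prop where
  lc : LCMeas μ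
  one_le_r : 1 ≤ r
  one_le_p : 1 ≤ p
  A_pos : 0 < A
  meas_φ : ∀ j, Measurable (φ j)
  meas_Q : Measurable Q
  Q_nonneg : ∀ x, 0 ≤ Q x
  Q_tri : ∀ l : ℝ, 0 < l → l < 1 → ∀ x y, l * Q x - (1 - l) * Q y ≤ Q (l • x + (1 - l) • y)
  hasSum : ∀ x, HasSum (fun j => |φ j x| ^ r) (Q x ^ r)
  mean : ∫⁻ x, ENNReal.ofReal (Q x) ∂μ ≤ ENNReal.ofReal A
  weak : ∀ f : E →ₗ[ℝ] ℝ, Measurable f → (∀ x, |f x| ≤ Q x) →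
    ∫⁻ x, ENNReal.ofReal (|f x| ^ p) ∂μ ≤ ENNReal.ofReal (A ^ p)

variable {μ : Measure E} {φ : ℕ → E →ₗ[ℝ] ℝ} {Q : E → ℝ} {r p A : ℝ}

/-- Hölder's inequality against the vector `(m j ^ (r - 1))`, normalised by the `ℓ_r` norm `D`
of `m`. -/
lemma MomentData.holder (h : MomentData μ φ Q r p A) {n : ℕ} {m : ℕ → ℝ} (hm : ∀ j, 0 ≤ m j)
    {D : ℝ} (hD : 0 < D) (hDm : ∑ j ∈ Finset.range n, m j ^ r = D ^ r) (x : E) :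
    ∑ j ∈ Finset.range n, (m j / D) ^ (r - 1) * |φ j x| ≤ Q x := by
  have hr0 : 0 < r := by linarith [h.one_le_r]
  have hle : ∑ j ∈ Finset.range n, |φ j x| ^ r ≤ Q x ^ r :=
    sum_le_hasSum _ (fun j _ => by positivity) (h.hasSum x)
  rcases (h.Q_nonneg x).eq_or_lt with h0 | h0
  · have hz : ∀ j ∈ Finset.range n, |φ j x| = 0 := by
      intro j hj
      rw [← h0, Real.zero_rpow hr0.ne'] at hle
      have h1 := (Finset.single_le_sum (f := fun j => |φ j x| ^ r)
        (fun j _ => by positivity) hj).trans hle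
      have h2 : |φ j x| ^ r = 0 := le_antisymm h1 (by positivity)
      exact ((Real.rpow_eq_zero (abs_nonneg _) hr0.ne').1 h2)
    rw [Finset.sum_eq_zero fun j hj => by rw [hz j hj, mul_zero]]
    exact h.Q_nonneg x
  have h1 : ∀ j ∈ Finset.range n, (m j / D) ^ (r - 1) * (|φ j x| / Q x) ≤
      (1 - 1 / r) * (m j / D) ^ r + 1 / r * (|φ j x| / Q x) ^ r := by
    intro j _
    have h3 : 0 ≤ m j / D := div_nonneg (hm j) hD.le
    have h4 : 0 ≤ |φ j x| / Q x := by positivity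
    have h2 := Real.geom_mean_le_arith_mean2_weighted (w₁ := 1 - 1 / r) (w₂ := 1 / r)
      (p₁ := (m j / D) ^ r) (p₂ := (|φ j x| / Q x) ^ r)
      (by rw [sub_nonneg, div_le_one hr0]; exact h.one_le_r) (by positivity) (by positivity)
      (by positivity) (by ring)
    rw [← Real.rpow_mul h3, ← Real.rpow_mul h4] at h2
    rwa [show r * (1 - 1 / r) = r - 1 by field_simp, mul_one_div_cancel hr0.ne',
      Real.rpow_one] at h2
  have h2 := Finset.sum_le_sum h1
  rw [Finset.sum_add_distrib, ← Finset.mul_sum, ← Finset.mul_sum] at h2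
  have h5 : ∑ j ∈ Finset.range n, (m j / D) ^ r = 1 := by
    simp_rw [Real.div_rpow (hm _) hD.le]
    rw [← Finset.sum_div, hDm, div_self (by positivity)]
  have h6 : ∑ j ∈ Finset.range n, (|φ j x| / Q x) ^ r ≤ 1 := by
    simp_rw [Real.div_rpow (abs_nonneg _) h0.le]
    rw [← Finset.sum_div]
    exact div_le_one_of_le₀ hle (by positivity)
  simp_rw [← mul_div_assoc] at h2
  rw [← Finset.sum_div, h5, div_le_iff₀ h0] at h2
  refine h2.trans ?_
  have h7 : 1 / r * ∑ j ∈ Finset.range n, (|φ j x| / Q x) ^ r ≤ 1 / r * 1 := by gcongr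
  nlinarith

/-- If each `f j` is at least `m j` on a third of `B`, a sixth of `B` carries a weighted sum of the
`f j` that is at least a sixth of the weighted sum of the `m j`. -/
lemma measure_large_sum {α : Type*} [MeasurableSpace α] {μ : Measure α}
    [IsFiniteMeasure μ] {n : ℕ} {a m : ℕ → ℝ} (ha : ∀ j, 0 ≤ a j)
    (hm : ∀ j, 0 ≤ m j) {D : ℝ} (hD : 0 < D) (hDm : ∑ j ∈ Finset.range n, a j * m j = D)
    {f : ℕ → α → ℝ} (hf : ∀ j, Measurable (f j)) (hf0 : ∀ j x, 0 ≤ f j x) {B : Set α}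
    (hmB : ∀ j, μ B / 3 ≤ μ (B ∩ {x | m j ≤ f j x})) :
    μ B / 6 ≤ μ (B ∩ {x | D / 6 ≤ ∑ j ∈ Finset.range n, a j * f j x}) := by
  set S := {x | D / 6 ≤ ∑ j ∈ Finset.range n, a j * f j x} with hS
  have hSm : MeasurableSet S := measurableSet_le measurable_const (by fun_prop)
  have hHm : ∀ j, MeasurableSet {x | m j ≤ f j x} := fun j => measurableSet_le measurable_const (hf j)
  have hpt : ∀ x, ∑ j ∈ Finset.range n, ENNReal.ofReal (a j * m j) *
      {x | m j ≤ f j x}.indicator 1 x ≤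
      ENNReal.ofReal D * S.indicator 1 x + ENNReal.ofReal (D / 6) := by
    intro x
    by_cases hx : x ∈ S
    · rw [Set.indicator_of_mem hx, Pi.one_apply, mul_one]
      refine le_trans ?_ le_self_add
      rw [← hDm, ENNReal.ofReal_sum_of_nonneg fun j _ => mul_nonneg (ha j) (hm j)]
      refine Finset.sum_le_sum fun j _ => ?_
      refine mul_le_of_le_one_right' ?_
      exact Set.indicator_le_self' (fun _ _ => zero_le) x |>.trans_eq rfl
    · rw [Set.indicator_of_notMem hx, mul_zero, zero_add]
      have hx' : ∑ j ∈ Finset.range n, a j * f j x < D / 6 := not_le.1 hx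
      refine le_trans ?_ (ENNReal.ofReal_le_ofReal hx'.le)
      rw [ENNReal.ofReal_sum_of_nonneg fun j _ => mul_nonneg (ha j) (hf0 j x)]
      refine Finset.sum_le_sum fun j _ => ?_
      by_cases hj : x ∈ {x | m j ≤ f j x}
      · rw [Set.indicator_of_mem hj, Pi.one_apply, mul_one]
        exact ENNReal.ofReal_le_ofReal (mul_le_mul_of_nonneg_left hj (ha j))
      · rw [Set.indicator_of_notMem hj, mul_zero]; exact zero_le
  have hint : ENNReal.ofReal D * (μ B / 3) ≤
      ENNReal.ofReal D * μ (B ∩ S) + ENNReal.ofReal (D / 6) * μ B := by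
    calc ENNReal.ofReal D * (μ B / 3)
        = ∑ j ∈ Finset.range n, ENNReal.ofReal (a j * m j) * (μ B / 3) := by
          rw [← Finset.sum_mul, ← hDm,
            ENNReal.ofReal_sum_of_nonneg fun j _ => mul_nonneg (ha j) (hm j)]
      _ ≤ ∑ j ∈ Finset.range n, ENNReal.ofReal (a j * m j) * μ (B ∩ {x | m j ≤ f j x}) := by
          gcongr with j; exact hmB j
      _ = ∫⁻ x in B, ∑ j ∈ Finset.range n, ENNReal.ofReal (a j * m j) *
            {x | m j ≤ f j x}.indicator 1 x ∂μ := by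
          rw [lintegral_finsetSum _ fun j _ => (measurable_one.indicator (hHm j)).const_mul _]
          refine Finset.sum_congr rfl fun j _ => ?_
          rw [lintegral_const_mul _ (measurable_one.indicator (hHm j)),
            lintegral_indicator_one (hHm j), Measure.restrict_apply (hHm j), Set.inter_comm]
      _ ≤ ∫⁻ x in B, (ENNReal.ofReal D * S.indicator 1 x + ENNReal.ofReal (D / 6)) ∂μ :=
          lintegral_mono hpt
      _ = _ := by
          rw [lintegral_add_right _ measurable_const, setLIntegral_const,
            lintegral_const_mul _ (measurable_one.indicator hSm), lintegral_indicator_one hSm,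
            Measure.restrict_apply hSm, Set.inter_comm]
  have h1 := ENNReal.toReal_mono (by finiteness) hint
  rw [ENNReal.toReal_add (by finiteness) (by finiteness)] at h1
  simp only [ENNReal.toReal_mul, ENNReal.toReal_div, ENNReal.toReal_ofReal hD.le,
    ENNReal.toReal_ofReal (div_pos hD (by norm_num : (0 : ℝ) < 6)).le] at h1
  norm_num at h1
  rw [← ENNReal.toReal_le_toReal (by finiteness) (by finiteness)]
  simp only [ENNReal.toReal_div]
  norm_num
  have h2 : D * ((μ B).toReal / 6) ≤ D * (μ (B ∩ S)).toReal := by linarith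
  exact le_of_mul_le_mul_left h2 hD

/-- On a set `B` that is not exponentially small, the `ℓ_r` norm of upper quantiles `m j` of the
coordinates is at most a constant times `A`. If this norm `D` were larger, Hölder's inequality would
turn `Q` into a weighted `ℓ₁` norm that is at least `D / 6` on a large part of `B`;
`LCMeas.exists_center` gives a point `y` there, and the functional with the signs of the `φ j y` is
dominated by `Q` and at least `D / 12` near `y`, against the bound on its `p`-th moment. -/
lemma MomentData.sum_median [IsProbabilityMeasure μ] (h : MomentData μ φ Q r p A) {k : ℕ}
    (hk : 1 ≤ k) (hkp : (k : ℝ) ≤ 8 * p) {B : Set E} (hB : MeasurableSet B)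
    (hBk : (3⁻¹ : ℝ≥0∞) ^ k ≤ μ B) {m : ℕ → ℝ} (hm : ∀ j, 0 ≤ m j)
    (hmB : ∀ j, μ B / 3 ≤ μ (B ∩ {x | m j ≤ |φ j x|})) (n : ℕ) :
    ∑ j ∈ Finset.range n, m j ^ r ≤ (12 * 839808 ^ 8 * A) ^ r := by
  have hr0 : 0 < r := by linarith [h.one_le_r]
  have hp0 : 0 < p := by linarith [h.one_le_p]
  have hA := h.A_pos
  set W := ∑ j ∈ Finset.range n, m j ^ r with hW
  by_contra! hcon
  have hW0 : 0 < W := lt_trans (by positivity) hcon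
  set D := W ^ (1 / r) with hD
  have hD0 : 0 < D := by positivity
  have hDr : D ^ r = W := by
    rw [hD, ← Real.rpow_mul hW0.le, one_div_mul_cancel hr0.ne', Real.rpow_one]
  have hDA : 12 * 839808 ^ 8 * A < D := by
    rw [← hDr] at hcon
    exact (Real.rpow_lt_rpow_iff (by positivity) hD0.le hr0).1 hcon
  set a : ℕ → ℝ := fun j => (m j / D) ^ (r - 1) with ha
  have ha0 : ∀ j, 0 ≤ a j := fun j => Real.rpow_nonneg (div_nonneg (hm j) hD0.le) _
  have hNQ : ∀ x, ∑ j ∈ Finset.range n, a j * |φ j x| ≤ Q x :=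
    h.holder hm hD0 (by rw [hDr])
  have ham : ∑ j ∈ Finset.range n, a j * m j = D := by
    have h1 : ∀ j, a j * m j = D * (m j / D) ^ r := by
      intro j
      rcases (hm j).eq_or_lt with h0 | h0
      · simp [← h0, Real.zero_rpow hr0.ne']
      · have h3 : 0 < m j / D := div_pos h0 hD0
        rw [ha]
        show (m j / D) ^ (r - 1) * m j = _
        rw [Real.rpow_sub_one h3.ne']
        field_simp
    simp_rw [h1]
    rw [← Finset.mul_sum]
    simp_rw [Real.div_rpow (hm _) hD0.le]
    rw [← Finset.sum_div, ← hW, hDr, div_self hW0.ne', mul_one]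
  have hφm := h.meas_φ
  have hS6 := measure_large_sum (μ := μ) ha0 hm hD0 ham (f := fun j x => |φ j x|)
    (fun j => (hφm j).abs) (fun j x => abs_nonneg _) hmB
  set S := B ∩ {x | D / 6 ≤ ∑ j ∈ Finset.range n, a j * |φ j x|} with hS
  have hSm : MeasurableSet S := hB.inter (measurableSet_le measurable_const (by fun_prop))
  have hSk : (18⁻¹ : ℝ≥0∞) ^ k ≤ μ S := by
    refine le_trans ?_ ((ENNReal.div_le_div_right hBk 6).trans hS6)
    rw [div_eq_mul_inv, show (18 : ℝ≥0∞) = 3 * 6 by norm_num,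
      ENNReal.mul_inv (by simp) (by simp), mul_pow]
    gcongr
    refine pow_le_of_le_one zero_le ?_ (by omega)
    rw [ENNReal.inv_le_one]; norm_num
  -- rescaled so that `∑ |L i|` has mean at most `1 / 2`
  set c : ℝ := 12 * 839808 ^ 8 / (2 * D) with hc
  have hc0 : 0 < c := by positivity
  set L : E →ₗ[ℝ] Fin n → ℝ := LinearMap.pi fun i => (c * a i) • φ i with hL
  have hLx : ∀ x i, L x i = c * a i * φ i x := fun x i => rfl
  have hLm : Measurable L := measurable_pi_lambda _ fun i => (hφm i).const_mul (c * a i)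
  have hLabs : ∀ x, ∑ i, |L x i| = c * ∑ j ∈ Finset.range n, a j * |φ j x| := by
    intro x
    rw [Finset.sum_range, Finset.mul_sum]
    refine Finset.sum_congr rfl fun i _ => ?_
    rw [hLx, abs_mul, abs_of_nonneg (mul_nonneg hc0.le (ha0 i)), mul_assoc]
  have hL1 : 1 / 2 ≤ μ {x | ∑ i, |L x i| ≤ 1} := by
    have h1 : μ {x | 1 ≤ ∑ i, |L x i|} ≤ 1 / 2 := by
      calc μ {x | 1 ≤ ∑ i, |L x i|} ≤ μ {x | 1 ≤ ENNReal.ofReal c * ENNReal.ofReal (Q x)} := by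
            refine measure_mono fun x (hx : 1 ≤ ∑ i, |L x i|) => ?_
            show 1 ≤ ENNReal.ofReal c * ENNReal.ofReal (Q x)
            rw [← ENNReal.ofReal_mul hc0.le, ENNReal.one_le_ofReal]
            rw [hLabs] at hx
            exact hx.trans (mul_le_mul_of_nonneg_left (hNQ x) hc0.le)
        _ ≤ ∫⁻ x, ENNReal.ofReal c * ENNReal.ofReal (Q x) ∂μ := by
            have := mul_meas_ge_le_lintegral (μ := μ)
              (f := fun x => ENNReal.ofReal c * ENNReal.ofReal (Q x))
              ((h.meas_Q.ennreal_ofReal).const_mul _) 1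
            simpa using this
        _ ≤ ENNReal.ofReal c * ENNReal.ofReal A := by
            rw [lintegral_const_mul _ h.meas_Q.ennreal_ofReal]
            gcongr
            exact h.mean
        _ ≤ ENNReal.ofReal (1 / 2) := by
            rw [← ENNReal.ofReal_mul hc0.le]
            refine ENNReal.ofReal_le_ofReal ?_
            rw [hc, div_mul_eq_mul_div, div_le_div_iff₀ (by positivity) (by norm_num)]
            linarith
        _ = 1 / 2 := by rw [ENNReal.ofReal_div_of_pos (by norm_num)]; simp
    have h2 : (1 : ℝ≥0∞) / 2 + 1 / 2 ≤ μ {x | ∑ i, |L x i| ≤ 1} + 1 / 2 := by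
      rw [ENNReal.add_halves]
      refine (measure_univ (μ := μ)).ge.trans
        ((measure_mono (t := {x | ∑ i, |L x i| ≤ 1} ∪ {x | 1 ≤ ∑ i, |L x i|})
        fun x _ => ?_).trans ((measure_union_le _ _).trans (by gcongr)))
      show ∑ i, |L x i| ≤ 1 ∨ 1 ≤ ∑ i, |L x i|
      exact le_total _ _
    exact (ENNReal.add_le_add_iff_right (by simp)).1 h2
  obtain ⟨y, hyS, hy⟩ := h.lc.exists_center hk L hLm hL1 hSm hSk
  set f : E →ₗ[ℝ] ℝ := ∑ j ∈ Finset.range n, (SignType.sign (φ j y) * a j : ℝ) • φ j with hf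
  have hfx : ∀ x, f x = ∑ j ∈ Finset.range n, (SignType.sign (φ j y) * a j : ℝ) * φ j x := by
    intro x; simp [hf, LinearMap.sum_apply]
  have hfm : Measurable f := by
    have : (f : E → ℝ) = fun x => ∑ j ∈ Finset.range n,
      (SignType.sign (φ j y) * a j : ℝ) * φ j x := funext hfx
    rw [this]
    fun_prop
  have hsgn : ∀ t : ℝ, |(SignType.sign t : ℝ)| ≤ 1 := by
    intro t
    rcases lt_trichotomy t 0 with h | h | h <;> simp [h]
  have hfQ : ∀ x, |f x| ≤ Q x := by
    intro x
    refine le_trans ?_ (hNQ x)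
    rw [hfx]
    refine (Finset.abs_sum_le_sum_abs _ _).trans (Finset.sum_le_sum fun j _ => ?_)
    rw [abs_mul, abs_mul, abs_of_nonneg (ha0 j)]
    have := mul_le_mul_of_nonneg_right (hsgn (φ j y)) (mul_nonneg (ha0 j) (abs_nonneg (φ j x)))
    linarith
  have hflow : ∀ x, ∑ i, |L x i - L y i| ≤ 32 * 419904 ^ 2 → D / 12 ≤ |f x| := by
    intro x hx
    have h1 : ∑ i, |L x i - L y i| = c * ∑ j ∈ Finset.range n, a j * |φ j x - φ j y| := by
      rw [Finset.sum_range, Finset.mul_sum]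
      refine Finset.sum_congr rfl fun i _ => ?_
      rw [hLx, hLx, ← mul_sub, abs_mul, abs_of_nonneg (mul_nonneg hc0.le (ha0 i)), mul_assoc]
    rw [h1] at hx
    have h2 : ∑ j ∈ Finset.range n, a j * |φ j x - φ j y| ≤ D / 12 := by
      rw [← le_div_iff₀' hc0] at hx
      refine hx.trans ?_
      rw [hc, div_div_eq_mul_div, div_le_div_iff₀ (by positivity) (by norm_num)]
      nlinarith
    have h3 : D / 6 ≤ ∑ j ∈ Finset.range n, a j * |φ j y| := hyS.2
    have h4 : ∑ j ∈ Finset.range n, a j * |φ j y| -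
        ∑ j ∈ Finset.range n, a j * |φ j x - φ j y| ≤ f x := by
      rw [hfx, ← Finset.sum_sub_distrib]
      refine Finset.sum_le_sum fun j _ => ?_
      have h5 : (SignType.sign (φ j y) : ℝ) * φ j y = |φ j y| := sign_mul_self _
      have h6 : -|φ j x - φ j y| ≤ (SignType.sign (φ j y) : ℝ) * (φ j x - φ j y) := by
        refine (abs_le.1 ?_).1
        rw [abs_mul]
        exact mul_le_of_le_one_left (abs_nonneg _) (hsgn _)
      rw [mul_sub, h5] at h6
      nlinarith [mul_le_mul_of_nonneg_left h6 (ha0 j)]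
    exact le_trans (by linarith) (le_abs_self _)
  have hw := h.weak f hfm hfQ
  have hmarkov : ENNReal.ofReal ((D / 12) ^ p) * (839808⁻¹ : ℝ≥0∞) ^ k ≤
      ENNReal.ofReal (A ^ p) := by
    refine le_trans ?_ hw
    refine le_trans ?_ (mul_meas_ge_le_lintegral (by fun_prop) (ENNReal.ofReal ((D / 12) ^ p)))
    gcongr
    refine hy.trans (measure_mono fun x hx => ?_)
    refine ENNReal.ofReal_le_ofReal ?_
    exact Real.rpow_le_rpow (by positivity) (hflow x hx) hp0.le
  have h9 := ENNReal.toReal_mono (by finiteness) hmarkov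
  rw [ENNReal.toReal_mul, ENNReal.toReal_ofReal (by positivity),
    ENNReal.toReal_ofReal (by positivity)] at h9
  simp only [ENNReal.toReal_pow, ENNReal.toReal_inv, ENNReal.toReal_ofNat] at h9
  have h10 : (839808 ^ 8 * A) ^ p < (D / 12) ^ p :=
    Real.rpow_lt_rpow (by positivity) (by linarith) hp0
  rw [Real.mul_rpow (by positivity) hA.le] at h10
  have h11 : (839808 : ℝ) ^ k ≤ ((839808 : ℝ) ^ 8) ^ p := by
    rw [← Real.rpow_natCast, ← Real.rpow_natCast, ← Real.rpow_mul (by norm_num)]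
    refine Real.rpow_le_rpow_of_exponent_le (by norm_num) ?_
    exact_mod_cast hkp
  rw [inv_pow, ← div_eq_mul_inv, div_le_iff₀ (by positivity)] at h9
  refine absurd (h9.trans ?_) (not_le.2 h10)
  rw [mul_comm]
  gcongr
end

/-! ### Dyadic sums and the sampling inequality -/

lemma rpow_le_tsum_dyadic {v s : ℝ} (hv : 0 ≤ v) (hs : 0 < s) :
    ENNReal.ofReal (v ^ s) ≤
      ∑' i : ℤ, ENNReal.ofReal (2 ^ (s * (i + 1))) * if (2 : ℝ) ^ i ≤ v then 1 else 0 := by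
  rcases hv.eq_or_lt with rfl | hv
  · simp [Real.zero_rpow hs.ne']
  obtain ⟨i, hi1, hi2⟩ := exists_mem_Ico_zpow hv (show (1 : ℝ) < 2 by norm_num)
  refine le_trans ?_ (ENNReal.le_tsum i)
  rw [if_pos hi1, mul_one]
  refine ENNReal.ofReal_le_ofReal ?_
  have h1 : (2 : ℝ) ^ (s * ((i : ℝ) + 1)) = ((2 : ℝ) ^ (i + 1)) ^ s := by
    rw [← Real.rpow_intCast, ← Real.rpow_mul (by norm_num)]
    push_cast
    rw [mul_comm]
  rw [h1]
  exact Real.rpow_le_rpow hv.le hi2.le hs.le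

lemma tsum_two_pow_neg_abs : ∑' i : ℤ, (2⁻¹ : ℝ≥0∞) ^ i.natAbs = 3 := by
  have h1 : HasSum (fun n : ℕ => (2⁻¹ : ℝ≥0∞) ^ ((n : ℤ)).natAbs) 2 := by
    have := ENNReal.summable.hasSum (f := fun n : ℕ => (2⁻¹ : ℝ≥0∞) ^ n)
    rw [ENNReal.tsum_geometric, ENNReal.one_sub_inv_two, inv_inv] at this
    simpa using this
  have h2 : HasSum (fun n : ℕ => (2⁻¹ : ℝ≥0∞) ^ (-((n : ℤ) + 1)).natAbs) 1 := by
    have := ENNReal.summable.hasSum (f := fun n : ℕ => (2⁻¹ : ℝ≥0∞) ^ (n + 1))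
    rw [ENNReal.tsum_geometric_add_one, ENNReal.one_sub_inv_two, inv_inv,
      ENNReal.inv_mul_cancel (by simp) (by simp)] at this
    convert this using 3
    omega
  have := HasSum.of_nat_of_neg_add_one (f := fun i : ℤ => (2⁻¹ : ℝ≥0∞) ^ i.natAbs) h1 h2
  rw [this.tsum_eq]; norm_num

lemma sq_le_eight_mul_two_rpow {y : ℝ} (hy : 0 ≤ y) : y ^ 2 ≤ 8 * 2 ^ y := by
  rw [Real.rpow_def_of_pos (by norm_num)]
  have h1 := Real.quadratic_le_exp_of_nonneg (x := Real.log 2 * y)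
    (mul_nonneg (Real.log_nonneg (by norm_num)) hy)
  have h2 := Real.log_two_gt_d9
  have h3 : (0.5 : ℝ) ≤ Real.log 2 := by linarith
  have h4 : (0.5 * y) ^ 2 ≤ (Real.log 2 * y) ^ 2 := by gcongr
  have h5 : 0 ≤ Real.log 2 * y := mul_nonneg (by linarith) hy
  nlinarith

lemma rpow_mul_two_rpow_neg_le {s y : ℝ} (hs : 1 ≤ s) (hy : 1 ≤ y) :
    y ^ s * 2 ^ (-(s * y)) ≤ 8 ^ s * y⁻¹ := by
  have hy0 : 0 < y := by linarith
  have h1 : y ^ s * 2 ^ (-(s * y)) = (y * 2 ^ (-y)) ^ s := by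
    rw [Real.mul_rpow hy0.le (by positivity), ← Real.rpow_mul (by norm_num)]
    ring_nf
  have h2 : y * 2 ^ (-y) ≤ 8 * y⁻¹ := by
    rw [Real.rpow_neg (by norm_num), ← div_eq_mul_inv, ← div_eq_mul_inv,
      div_le_div_iff₀ (by positivity) hy0]
    nlinarith [sq_le_eight_mul_two_rpow hy0.le]
  rw [h1]
  refine (Real.rpow_le_rpow (by positivity) h2 (by linarith)).trans ?_
  rw [Real.mul_rpow (by norm_num) (by positivity)]
  gcongr
  have := Real.rpow_le_rpow_of_exponent_ge (inv_pos.2 hy0) (inv_le_one_of_one_le₀ hy) hs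
  rwa [Real.rpow_one] at this

/-- A dyadic form of the bound of the `s`-th moment by a tail that decays exponentially at
scale `m`. -/
lemma tsum_dyadic_tail {s m : ℝ} (hs : 1 ≤ s) (hm : 0 < m) (c : ℝ≥0∞) {h : ℤ → ℝ≥0∞}
    (h1 : ∀ i, h i ≤ c)
    (h2 : ∀ i : ℤ, s * m ≤ (2 : ℝ) ^ i → h i ≤ ENNReal.ofReal (2 ^ (-((2 : ℝ) ^ i / m))) * c) :
    ∑' i : ℤ, ENNReal.ofReal (2 ^ (s * i)) * h i ≤ ENNReal.ofReal ((48 * s * m) ^ s) * c := by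
  have hs0 : 0 < s := by linarith
  set a := s * m with ha
  have ha0 : 0 < a := by positivity
  obtain ⟨i₀, hi1, hi2⟩ := exists_mem_Ico_zpow ha0 (show (1 : ℝ) < 2 by norm_num)
  have hpow : ∀ i : ℤ, (2 : ℝ) ^ (s * i) = a ^ s * ((2 : ℝ) ^ i / a) ^ s := by
    intro i
    rw [← Real.mul_rpow ha0.le (by positivity), mul_div_cancel₀ _ ha0.ne', ← Real.rpow_intCast,
      ← Real.rpow_mul (by norm_num), mul_comm]
  have h8 : (8 * a) ^ s = a ^ s * 8 ^ s := by
    rw [mul_comm, Real.mul_rpow ha0.le (by norm_num)]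
  have hterm : ∀ i : ℤ, ENNReal.ofReal (2 ^ (s * i)) * h i ≤
      ENNReal.ofReal ((8 * a) ^ s) * (2 * 2⁻¹ ^ (i - i₀).natAbs) * c := by
    intro i
    have hconv : ∀ n : ℕ, (2 : ℝ≥0∞) * 2⁻¹ ^ n = ENNReal.ofReal (2 * 2⁻¹ ^ n) := by
      intro n
      rw [ENNReal.ofReal_mul (by norm_num), ENNReal.ofReal_pow (by norm_num),
        ENNReal.ofReal_inv_of_pos (by norm_num)]
      simp
    rw [hconv, ← ENNReal.ofReal_mul (by positivity)]
    rcases lt_or_ge ((2 : ℝ) ^ i) a with hlt | hge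
    · have hii : i ≤ i₀ := by
        by_contra! hcon
        have : (2 : ℝ) ^ (i₀ + 1) ≤ 2 ^ i := zpow_le_zpow_right₀ (by norm_num) (by omega)
        linarith
      refine mul_le_mul' (ENNReal.ofReal_le_ofReal ?_) (h1 i)
      rw [hpow, h8, mul_assoc]
      refine mul_le_mul_of_nonneg_left ?_ (by positivity)
      have hy : (2 : ℝ) ^ i / a ≤ 1 := (div_le_one ha0).2 hlt.le
      have h3 := Real.rpow_le_rpow_of_exponent_ge (by positivity) hy hs
      rw [Real.rpow_one] at h3
      have h4 : (2 : ℝ) ^ i / a ≤ 2⁻¹ ^ (i - i₀).natAbs := by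
        have : (2⁻¹ : ℝ) ^ (i - i₀).natAbs = 2 ^ i / 2 ^ i₀ := by
          rw [← zpow_sub₀ (by norm_num), ← zpow_natCast, inv_zpow', Int.natCast_natAbs,
            abs_of_nonpos (by omega)]
          congr 1
          ring
        rw [this]
        gcongr
      have h5 : (1 : ℝ) ≤ 8 ^ s := Real.one_le_rpow (by norm_num) (by linarith)
      have h6 : (0 : ℝ) < 2⁻¹ ^ (i - i₀).natAbs := by positivity
      nlinarith
    · have hii : i₀ ≤ i := by
        by_contra! hcon
        have : (2 : ℝ) ^ i < 2 ^ i₀ := zpow_lt_zpow_right₀ (by norm_num) hcon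
        linarith
      refine (mul_le_mul_right (h2 i hge) _).trans ?_
      rw [← mul_assoc, ← ENNReal.ofReal_mul (by positivity)]
      refine mul_le_mul_left (ENNReal.ofReal_le_ofReal ?_) _
      rw [hpow, h8, mul_assoc, mul_assoc]
      refine mul_le_mul_of_nonneg_left ?_ (by positivity)
      have hy : 1 ≤ (2 : ℝ) ^ i / a := (one_le_div ha0).2 hge
      have h3 := rpow_mul_two_rpow_neg_le hs hy
      have h4 : s * ((2 : ℝ) ^ i / a) = 2 ^ i / m := by
        rw [ha]; field_simp
      rw [h4] at h3
      refine h3.trans ?_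
      gcongr
      have : (2 : ℝ) * 2⁻¹ ^ (i - i₀).natAbs = 2 ^ (i₀ + 1) / 2 ^ i := by
        rw [← zpow_sub₀ (by norm_num), ← zpow_natCast, inv_zpow', Int.natCast_natAbs,
          abs_of_nonneg (by omega), ← zpow_one_add₀ (by norm_num)]
        congr 1
        ring
      rw [this, inv_div]
      gcongr
  calc ∑' i : ℤ, ENNReal.ofReal (2 ^ (s * i)) * h i
      ≤ ∑' i : ℤ, ENNReal.ofReal ((8 * a) ^ s) * (2 * 2⁻¹ ^ (i - i₀).natAbs) * c :=
        ENNReal.tsum_le_tsum hterm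
    _ = ENNReal.ofReal ((8 * a) ^ s) * (2 * 3) * c := by
        rw [ENNReal.tsum_mul_right, ENNReal.tsum_mul_left, ENNReal.tsum_mul_left,
          ← tsum_two_pow_neg_abs,
          ← (Equiv.subRight i₀).tsum_eq fun i : ℤ => (2⁻¹ : ℝ≥0∞) ^ i.natAbs]
        rfl
    _ ≤ ENNReal.ofReal ((48 * s * m) ^ s) * c := by
        gcongr
        have h6 : (2 * 3 : ℝ≥0∞) = ENNReal.ofReal 6 := by norm_num
        rw [h6, ← ENNReal.ofReal_mul (by positivity)]
        refine ENNReal.ofReal_le_ofReal ?_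
        have h7 : (48 * s * m) = (8 * a) * 6 := by rw [ha]; ring
        rw [h7, Real.mul_rpow (mul_nonneg (by norm_num) ha0.le) (by norm_num)]
        refine mul_le_mul_of_nonneg_left ?_ (by positivity)
        have := Real.rpow_le_rpow_of_exponent_le (show (1 : ℝ) ≤ 6 by norm_num) hs
        rwa [Real.rpow_one] at this

section
variable {E : Type*} [AddCommGroup E] [Module ℝ E] [MeasurableSpace E] {μ : Measure E}

/-- The dyadic moment bound for the square root of the tails of one functional on a convex set
`B`, in terms of an upper quantile `m`. -/
lemma LCMeas.tsum_sqrt_tail [IsFiniteMeasure μ] (h : LCMeas μ) {r : ℝ} (hr : 1 ≤ r)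
    {f : E →ₗ[ℝ] ℝ} (hf : Measurable f) {B : Set E} (hB : MeasurableSet B) (hBc : Convex ℝ B)
    {m : ℝ} (hm : 0 ≤ m) (hmB : μ (B ∩ {x | m < |f x|}) ≤ μ B / 3) :
    ∑' i : ℤ, ENNReal.ofReal (2 ^ (r * (i + 1))) *
      μ (B ∩ {x | (2 : ℝ) ^ i ≤ |f x|}) ^ (1 / 2 : ℝ) ≤
      ENNReal.ofReal ((768 * r * m) ^ r) * μ B ^ (1 / 2 : ℝ) := by
  have hr0 : 0 < r := by linarith
  set ν := μ.restrict B with hν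
  have hνB : ∀ t : Set E, MeasurableSet t → ν t = μ (B ∩ t) := fun t ht => by
    rw [hν, Measure.restrict_apply ht, Set.inter_comm]
  have hlt : ∀ t : ℝ, MeasurableSet {x | t < |f x|} := fun t => measurableSet_lt measurable_const hf.abs
  have hle : ∀ t : ℝ, MeasurableSet {x | t ≤ |f x|} := fun t => measurableSet_le measurable_const hf.abs
  have hle' : MeasurableSet {x | |f x| ≤ m} := measurableSet_le hf.abs measurable_const
  have hlog := h.restrict hB hBc
  have hβ : ν {x | m < |f x|} ≤ 2⁻¹ * ν {x | |f x| ≤ m} := by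
    have h1 : μ B = μ (B ∩ {x | m < |f x|}) + μ (B ∩ {x | |f x| ≤ m}) := by
      rw [← measure_inter_add_sdiff B (hlt m)]
      congr 2
      ext x
      simp
    rw [hνB _ (hlt m), hνB _ hle']
    set u := μ (B ∩ {x | m < |f x|}) with hu
    set v := μ (B ∩ {x | |f x| ≤ m}) with hv
    rw [h1] at hmB
    have h2 := ENNReal.toReal_mono (by finiteness) hmB
    rw [ENNReal.toReal_div, ENNReal.toReal_add (by finiteness) (by finiteness)] at h2
    rw [← ENNReal.toReal_le_toReal (by finiteness) (by finiteness)]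
    rw [ENNReal.toReal_mul, ENNReal.toReal_inv]
    norm_num at h2 ⊢
    linarith
  have hbor : ∀ t : ℝ, 1 ≤ t → ν {x | t * m < |f x|} ≤ 2⁻¹ ^ ((t + 1) / 2) * μ B := by
    intro t ht
    refine (hlog.borell hf.abs (fun l hl0 hl1 x y => ?_) hm hβ ht).trans ?_
    · have h1 : l * f x = f (l • x + (1 - l) • y) - (1 - l) * f y := by simp
      have h2 := abs_sub (f (l • x + (1 - l) • y)) ((1 - l) * f y)
      rw [← h1, abs_mul, abs_mul, abs_of_pos hl0, abs_of_pos (sub_pos.2 hl1)] at h2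
      linarith
    · refine mul_le_mul_right ?_ _
      rw [hνB _ hle']
      exact measure_mono Set.inter_subset_left
  rcases hm.eq_or_lt with rfl | hm0
  · have hz : ν {x | 0 < |f x|} = 0 := by
      have h1 : ∀ n : ℕ, ν {x | 0 < |f x|} ≤ 2⁻¹ ^ n * μ B := by
        intro n
        have := hbor (2 * n + 1) (by
          have : (0 : ℝ) ≤ n := Nat.cast_nonneg n
          linarith)
        rw [mul_zero] at this
        refine this.trans ?_
        gcongr
        rw [← ENNReal.rpow_natCast]
        exact ENNReal.rpow_le_rpow_of_exponent_ge (by simp) (by linarith)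
      have h2 : Filter.Tendsto (fun n : ℕ => (2⁻¹ : ℝ≥0∞) ^ n * μ B) Filter.atTop (nhds (0 * μ B)) :=
        ENNReal.Tendsto.mul_const
          (ENNReal.tendsto_pow_atTop_nhds_zero_of_lt_one (by simp))
          (Or.inr (measure_ne_top _ _))
      rw [zero_mul] at h2
      exact le_antisymm (ge_of_tendsto' h2 h1) zero_le
    have hz' : ∀ i : ℤ, μ (B ∩ {x | (2 : ℝ) ^ i ≤ |f x|}) = 0 := by
      intro i
      rw [← hνB _ (hle _)]
      refine measure_mono_null (t := {x | 0 < |f x|}) (fun x (hx : (2 : ℝ) ^ i ≤ |f x|) => ?_) hz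
      exact lt_of_lt_of_le (by positivity) hx
    simp [hz']
  have key := tsum_dyadic_tail hr (m := 8 * m) (by positivity) (μ B ^ (1 / 2 : ℝ))
    (h := fun i : ℤ => μ (B ∩ {x | (2 : ℝ) ^ i ≤ |f x|}) ^ (1 / 2 : ℝ))
    (fun i => ENNReal.rpow_le_rpow (measure_mono Set.inter_subset_left) (by norm_num))
    (by
      intro i hi
      set t : ℝ := 2 ^ i / (2 * m) with ht
      have ht1 : 1 ≤ t := by
        rw [ht, one_le_div (by positivity)]
        nlinarith
      have h1 : μ (B ∩ {x | (2 : ℝ) ^ i ≤ |f x|}) ≤ 2⁻¹ ^ (t / 2) * μ B := by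
        rw [← hνB _ (hle _)]
        refine (measure_mono (t := {x | t * m < |f x|})
          fun x (hx : (2 : ℝ) ^ i ≤ |f x|) => ?_).trans ((hbor t ht1).trans ?_)
        · show t * m < |f x|
          refine lt_of_lt_of_le ?_ hx
          rw [ht]
          have : (0 : ℝ) < 2 ^ i := by positivity
          field_simp
          linarith
        · gcongr ?_ * _
          exact ENNReal.rpow_le_rpow_of_exponent_ge (by simp) (by linarith)
      refine (ENNReal.rpow_le_rpow h1 (by norm_num)).trans_eq ?_
      rw [ENNReal.mul_rpow_of_nonneg _ _ (by norm_num), ← ENNReal.rpow_mul]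
      congr 1
      rw [← ENNReal.ofReal_rpow_of_pos (by norm_num), ENNReal.inv_rpow, ENNReal.rpow_neg,
        ENNReal.ofReal_ofNat]
      congr 2
      rw [ht]; field_simp; norm_num)
  have h2 : ∀ i : ℤ, ENNReal.ofReal ((2 : ℝ) ^ (r * ((i : ℝ) + 1))) =
      ENNReal.ofReal (2 ^ r) * ENNReal.ofReal (2 ^ (r * i)) := by
    intro i
    rw [← ENNReal.ofReal_mul (by positivity), ← Real.rpow_add (by norm_num)]
    ring_nf
  simp_rw [h2, mul_assoc]
  rw [ENNReal.tsum_mul_left]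
  refine (mul_le_mul_right key _).trans_eq ?_
  rw [← mul_assoc, ← ENNReal.ofReal_mul (by positivity), ← Real.mul_rpow (by norm_num) (by positivity)]
  congr 3
  ring

/-- A sampling inequality. If the square roots of the masses `μ (B ∩ H a)` are summable against the
weights `c a` with a bound `R √(μ B)`, uniformly over convex sets `B` of mass at least `η`, then
`∑ c a 1_{H a}` exceeds `2 R` only with probability `√η`. The proof repeatedly replaces `B` by
`B ∩ H a`, which stays convex, and gains a factor `2` at each step. -/
lemma sampling [IsProbabilityMeasure μ] {ι : Type*} [Countable ι] {c : ι → ℝ≥0∞} {H : ι → Set E}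
    (hH : ∀ a, MeasurableSet (H a)) (hHc : ∀ a, Convex ℝ (H a)) {R η : ℝ≥0∞} (hR0 : R ≠ 0)
    (hRt : R ≠ ∞)
    (hsum : ∀ B : Set E, MeasurableSet B → Convex ℝ B → η ≤ μ B →
      ∑' a, c a * μ (B ∩ H a) ^ (1 / 2 : ℝ) ≤ R * μ B ^ (1 / 2 : ℝ)) :
    μ {x | 2 * R ≤ ∑' a, c a * (H a).indicator 1 x} ≤ η ^ (1 / 2 : ℝ) := by
  have hGm : Measurable fun x => ∑' a, c a * (H a).indicator (1 : E → ℝ≥0∞) x :=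
    Measurable.tsum fun a => (measurable_one.indicator (hH a)).const_mul _
  set S := {x | 2 * R ≤ ∑' a, c a * (H a).indicator (1 : E → ℝ≥0∞) x} with hS
  have hSm : MeasurableSet S := measurableSet_le measurable_const hGm
  have hhalf : ∀ x : ℝ≥0∞, x ^ (1 / 2 : ℝ) * x ^ (1 / 2 : ℝ) = x := by
    intro x
    rw [← ENNReal.rpow_add_of_nonneg _ _ (by norm_num) (by norm_num)]
    norm_num
  have claim : ∀ l : ℕ, ∀ B : Set E, MeasurableSet B → Convex ℝ B →
      μ (S ∩ B) ≤ 2⁻¹ ^ l * μ B + η ^ (1 / 2 : ℝ) * μ B ^ (1 / 2 : ℝ) := by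
    intro l
    induction l with
    | zero =>
      intro B _ _
      rw [pow_zero, one_mul]
      exact (measure_mono Set.inter_subset_right).trans le_self_add
    | succ l ih =>
      intro B hB hBc
      rcases lt_or_ge (μ B) η with hlt | hge
      · refine (measure_mono Set.inter_subset_right).trans (le_trans ?_ le_add_self)
        nth_rewrite 1 [← hhalf (μ B)]
        gcongr
      have h1 : 2 * R * μ (S ∩ B) ≤
          R * (2⁻¹ ^ l * μ B + η ^ (1 / 2 : ℝ) * μ B ^ (1 / 2 : ℝ)) := by
        calc 2 * R * μ (S ∩ B) = ∫⁻ _ in S ∩ B, 2 * R ∂μ := by rw [setLIntegral_const]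
          _ ≤ ∫⁻ x in S ∩ B, ∑' a, c a * (H a).indicator (1 : E → ℝ≥0∞) x ∂μ :=
              setLIntegral_mono' (hSm.inter hB) fun x hx => hx.1
          _ = ∑' a, c a * μ (S ∩ (B ∩ H a)) := by
              rw [lintegral_tsum fun a =>
                ((measurable_one.indicator (hH a)).const_mul _).aemeasurable]
              congr 1
              ext a
              rw [lintegral_const_mul _ (measurable_one.indicator (hH a)),
                lintegral_indicator_one (hH a), Measure.restrict_apply (hH a)]
              congr 2
              ext x
              simp only [Set.mem_inter_iff]
              tauto
          _ ≤ ∑' a, c a * μ (B ∩ H a) ^ (1 / 2 : ℝ) *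
                (2⁻¹ ^ l * μ B ^ (1 / 2 : ℝ) + η ^ (1 / 2 : ℝ)) := by
              refine ENNReal.tsum_le_tsum fun a => ?_
              rw [mul_assoc]
              gcongr
              refine (ih _ (hB.inter (hH a)) (hBc.inter (hHc a))).trans ?_
              nth_rewrite 1 [← hhalf (μ (B ∩ H a))]
              rw [mul_add]
              refine add_le_add ?_ (mul_comm _ _).le
              rw [mul_left_comm]
              gcongr
              exact Set.inter_subset_left
          _ ≤ R * μ B ^ (1 / 2 : ℝ) * (2⁻¹ ^ l * μ B ^ (1 / 2 : ℝ) + η ^ (1 / 2 : ℝ)) := by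
              rw [ENNReal.tsum_mul_right]
              gcongr
              exact hsum B hB hBc hge
          _ = R * (2⁻¹ ^ l * μ B + η ^ (1 / 2 : ℝ) * μ B ^ (1 / 2 : ℝ)) := by
              rw [mul_assoc, mul_add, mul_left_comm, hhalf, mul_comm (η ^ (1 / 2 : ℝ))]
      have h2 : 2 * μ (S ∩ B) ≤ 2⁻¹ ^ l * μ B + η ^ (1 / 2 : ℝ) * μ B ^ (1 / 2 : ℝ) := by
        rw [mul_comm 2 R, mul_assoc] at h1
        exact (ENNReal.mul_le_mul_iff_right hR0 hRt).1 h1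
      calc μ (S ∩ B) = 2⁻¹ * (2 * μ (S ∩ B)) := by
            rw [← mul_assoc, ENNReal.inv_mul_cancel (by simp) (by simp), one_mul]
        _ ≤ 2⁻¹ * (2⁻¹ ^ l * μ B + η ^ (1 / 2 : ℝ) * μ B ^ (1 / 2 : ℝ)) := by gcongr
        _ ≤ _ := by
            rw [mul_add, ← mul_assoc, ← pow_succ']
            refine add_le_add le_rfl ?_
            exact mul_le_of_le_one_left' (ENNReal.inv_le_one.2 one_le_two)
  have h3 : ∀ l : ℕ, μ S ≤ 2⁻¹ ^ l + η ^ (1 / 2 : ℝ) := by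
    intro l
    simpa using claim l Set.univ MeasurableSet.univ convex_univ
  have h4 : Filter.Tendsto (fun l : ℕ => (2⁻¹ : ℝ≥0∞) ^ l + η ^ (1 / 2 : ℝ)) Filter.atTop
      (nhds (0 + η ^ (1 / 2 : ℝ))) :=
    (ENNReal.tendsto_pow_atTop_nhds_zero_of_lt_one (by simp)).add tendsto_const_nhds
  rw [zero_add] at h4
  exact ge_of_tendsto' h4 h3
end

/-! ### The moment bound for an `ℓ_r` norm -/

section
variable {E : Type*} [AddCommGroup E] [Module ℝ E] {φ : ℕ → E →ₗ[ℝ] ℝ}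

/-- The half-space `{±φ j ≥ 2 ^ i}`. -/
def dyadicHalfSpace (φ : ℕ → E →ₗ[ℝ] ℝ) (a : ℕ × ℤ × Bool) : Set E :=
  {x | (2 : ℝ) ^ a.2.1 ≤ (if a.2.2 then φ a.1 else -φ a.1) x}

lemma convex_dyadicHalfSpace (a : ℕ × ℤ × Bool) : Convex ℝ (dyadicHalfSpace φ a) :=
  (convex_Ici ((2 : ℝ) ^ a.2.1)).linear_preimage (if a.2.2 then φ a.1 else -φ a.1)

lemma dyadicHalfSpace_subset (j : ℕ) (i : ℤ) (b : Bool) :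
    dyadicHalfSpace φ (j, i, b) ⊆ {x | (2 : ℝ) ^ i ≤ |φ j x|} := by
  intro x hx
  cases b
  · exact le_trans hx (neg_le_abs (φ j x))
  · exact le_trans hx (le_abs_self (φ j x))

variable [MeasurableSpace E] {μ : Measure E} {Q : E → ℝ} {r p A : ℝ}

lemma measurableSet_dyadicHalfSpace (hφ : ∀ j, Measurable (φ j)) (a : ℕ × ℤ × Bool) :
    MeasurableSet (dyadicHalfSpace φ a) := by
  obtain ⟨j, i, b⟩ := a
  cases b
  · exact measurableSet_le measurable_const (hφ j).neg
  · exact measurableSet_le measurable_const (hφ j)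

/-- The weighted count of dyadic half-spaces containing `x` dominates `Q x ^ r`. -/
lemma MomentData.rpow_le_tsum (h : MomentData μ φ Q r p A) (x : E) :
    ENNReal.ofReal (Q x ^ r) ≤ ∑' a : ℕ × ℤ × Bool,
      ENNReal.ofReal (2 ^ (r * ((a.2.1 : ℝ) + 1))) * (dyadicHalfSpace φ a).indicator 1 x := by
  have hr0 : 0 < r := by linarith [h.one_le_r]
  rw [← (h.hasSum x).tsum_eq,
    ENNReal.ofReal_tsum_of_nonneg (fun j => by positivity) (h.hasSum x).summable,
    ENNReal.tsum_prod' ]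
  refine ENNReal.tsum_le_tsum fun j => (rpow_le_tsum_dyadic (abs_nonneg _) hr0).trans ?_
  rw [ENNReal.tsum_prod']
  refine ENNReal.tsum_le_tsum fun i => ?_
  change _ ≤ ∑' b : Bool, ENNReal.ofReal (2 ^ (r * ((i : ℝ) + 1))) *
    (dyadicHalfSpace φ (j, i, b)).indicator (1 : E → ℝ≥0∞) x
  rw [ENNReal.tsum_mul_left]
  refine mul_le_mul_right ?_ _
  split_ifs with hi
  · rcases le_total 0 (φ j x) with h0 | h0
    · refine le_trans ?_ (ENNReal.le_tsum true)
      rw [abs_of_nonneg h0] at hi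
      rw [Set.indicator_of_mem (show x ∈ dyadicHalfSpace φ (j, i, true) from hi)]
      rfl
    · refine le_trans ?_ (ENNReal.le_tsum false)
      rw [abs_of_nonpos h0] at hi
      rw [Set.indicator_of_mem (show x ∈ dyadicHalfSpace φ (j, i, false) from hi)]
      rfl
  · exact zero_le

/-- The hypothesis of `sampling` for the dyadic half-spaces. -/
lemma MomentData.tsum_sqrt_le [IsProbabilityMeasure μ] (h : MomentData μ φ Q r p A) {k : ℕ}
    (hk : 1 ≤ k) (hkp : (k : ℝ) ≤ 8 * p) {B : Set E} (hB : MeasurableSet B) (hBc : Convex ℝ B)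
    (hBk : (3⁻¹ : ℝ≥0∞) ^ k ≤ μ B) :
    ∑' a : ℕ × ℤ × Bool, ENNReal.ofReal (2 ^ (r * ((a.2.1 : ℝ) + 1))) *
      μ (B ∩ dyadicHalfSpace φ a) ^ (1 / 2 : ℝ) ≤
      ENNReal.ofReal ((1536 * r * (12 * 839808 ^ 8 * A)) ^ r) * μ B ^ (1 / 2 : ℝ) := by
  have hr := h.one_le_r
  have hr0 : 0 < r := by linarith
  have hA := h.A_pos
  have hνB : ∀ t : Set E, MeasurableSet t → μ.restrict B t = μ (B ∩ t) := fun t ht => by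
    rw [Measure.restrict_apply ht, Set.inter_comm]
  choose m hm hm1 hm2 using fun j =>
    exists_quantile (μ.restrict B) (h.meas_φ j).abs (fun x => abs_nonneg (φ j x))
  simp_rw [Measure.restrict_apply_univ] at hm1 hm2
  replace hm1 : ∀ j, μ (B ∩ {x | m j < |φ j x|}) ≤ μ B / 3 := fun j => by
    rw [← hνB _ (measurableSet_lt measurable_const (h.meas_φ j).abs)]
    exact hm1 j
  replace hm2 : ∀ j, μ B / 3 ≤ μ (B ∩ {x | m j ≤ |φ j x|}) := fun j => by
    rw [← hνB _ (measurableSet_le measurable_const (h.meas_φ j).abs)]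
    exact hm2 j
  set C := (12 * 839808 ^ 8 * A : ℝ) with hC
  have hC0 : 0 < C := by positivity
  have hsum := h.sum_median hk hkp hB hBk hm hm2
  have hj : ∀ j, ∑' ib : ℤ × Bool, ENNReal.ofReal (2 ^ (r * ((ib.1 : ℝ) + 1))) *
      μ (B ∩ dyadicHalfSpace φ (j, ib)) ^ (1 / 2 : ℝ) ≤
      2 * (ENNReal.ofReal ((768 * r) ^ r) * μ B ^ (1 / 2 : ℝ)) * ENNReal.ofReal (m j ^ r) := by
    intro j
    have h1 := h.lc.tsum_sqrt_tail hr (h.meas_φ j) hB hBc (hm j) (hm1 j)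
    calc _ ≤ ∑' i : ℤ, 2 * (ENNReal.ofReal (2 ^ (r * ((i : ℝ) + 1))) *
          μ (B ∩ {x | (2 : ℝ) ^ i ≤ |φ j x|}) ^ (1 / 2 : ℝ)) := by
          rw [ENNReal.tsum_prod']
          refine ENNReal.tsum_le_tsum fun i => ?_
          rw [tsum_bool, two_mul]
          gcongr <;> exact dyadicHalfSpace_subset _ _ _
      _ ≤ 2 * (ENNReal.ofReal ((768 * r * m j) ^ r) * μ B ^ (1 / 2 : ℝ)) := by
          rw [ENNReal.tsum_mul_left]
          gcongr
      _ = _ := by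
          rw [Real.mul_rpow (by positivity) (hm j), ENNReal.ofReal_mul (by positivity)]
          ring
  rw [ENNReal.tsum_prod']
  refine (ENNReal.tsum_le_tsum hj).trans ?_
  rw [ENNReal.tsum_mul_left]
  have h2 : ∑' j, ENNReal.ofReal (m j ^ r) ≤ ENNReal.ofReal (C ^ r) := by
    refine ENNReal.tsum_le_of_sum_range_le fun n => ?_
    rw [← ENNReal.ofReal_sum_of_nonneg fun j _ => Real.rpow_nonneg (hm j) _]
    exact ENNReal.ofReal_le_ofReal (hsum n)
  refine (mul_le_mul_right h2 _).trans ?_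
  have h3 : ENNReal.ofReal ((1536 * r * C) ^ r) =
      ENNReal.ofReal (2 ^ r) * (ENNReal.ofReal ((768 * r) ^ r) * ENNReal.ofReal (C ^ r)) := by
    rw [← ENNReal.ofReal_mul (by positivity), ← ENNReal.ofReal_mul (by positivity),
      ← Real.mul_rpow (by positivity) (by positivity),
      ← Real.mul_rpow (by positivity) (by positivity)]
    ring_nf
  have h4 : (2 : ℝ≥0∞) ≤ ENNReal.ofReal (2 ^ r) := by
    have := Real.rpow_le_rpow_of_exponent_le (show (1 : ℝ) ≤ 2 by norm_num) hr
    rw [Real.rpow_one] at this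
    simpa using ENNReal.ofReal_le_ofReal this
  rw [h3]
  calc _ = 2 * (ENNReal.ofReal ((768 * r) ^ r) * ENNReal.ofReal (C ^ r)) * μ B ^ (1 / 2 : ℝ) := by
        ring
    _ ≤ _ := by gcongr

/-- The tail estimate at level `M`, a constant times `r A`. -/
lemma MomentData.measure_tail [IsProbabilityMeasure μ] (h : MomentData μ φ Q r p A) {M : ℝ}
    (hM : M = 3072 * r * (12 * 839808 ^ 8 * A)) :
    μ {x | M < Q x} ≤ 27⁻¹ ^ p := by
  have hr := h.one_le_r
  have hp := h.one_le_p
  have hA := h.A_pos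
  have hr0 : 0 < r := by linarith
  have hk1 := Nat.le_ceil (6 * p)
  have hk2 := Nat.ceil_lt_add_one (a := 6 * p) (by linarith)
  have hk : 1 ≤ ⌈6 * p⌉₊ := Nat.one_le_iff_ne_zero.2 (by
    intro h0
    rw [h0, Nat.cast_zero] at hk1
    linarith)
  set k := ⌈6 * p⌉₊
  set R := (1536 * r * (12 * 839808 ^ 8 * A) : ℝ) with hR
  have hR0 : 0 < R := by positivity
  have h1 := sampling (μ := μ) (c := fun a : ℕ × ℤ × Bool =>
      ENNReal.ofReal (2 ^ (r * ((a.2.1 : ℝ) + 1)))) (H := dyadicHalfSpace φ)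
    (R := ENNReal.ofReal (R ^ r)) (η := 3⁻¹ ^ k)
    (measurableSet_dyadicHalfSpace h.meas_φ) convex_dyadicHalfSpace
    (by rw [Ne, ENNReal.ofReal_eq_zero, not_le]; positivity) (by finiteness)
    (fun B hB hBc hBk => h.tsum_sqrt_le hk (by linarith) hB hBc hBk)
  refine (measure_mono fun x (hx : M < Q x) => ?_).trans (h1.trans ?_)
  · refine le_trans ?_ (h.rpow_le_tsum x)
    have h2 : 2 * R ^ r ≤ Q x ^ r := by
      have h3 : M = 2 * R := by rw [hM, hR]; ring
      have h4 : (2 : ℝ) ≤ 2 ^ r := by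
        have := Real.rpow_le_rpow_of_exponent_le (show (1 : ℝ) ≤ 2 by norm_num) hr
        rwa [Real.rpow_one] at this
      calc 2 * R ^ r ≤ 2 ^ r * R ^ r := by gcongr
        _ = M ^ r := by rw [h3, Real.mul_rpow (by norm_num) hR0.le]
        _ ≤ Q x ^ r := by gcongr; rw [h3]; positivity
    calc 2 * ENNReal.ofReal (R ^ r) = ENNReal.ofReal (2 * R ^ r) := by
          rw [ENNReal.ofReal_mul (by norm_num), ENNReal.ofReal_ofNat]
      _ ≤ _ := ENNReal.ofReal_le_ofReal h2
  · rw [← ENNReal.rpow_natCast, ← ENNReal.rpow_mul]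
    have h5 : (27⁻¹ : ℝ≥0∞) = 3⁻¹ ^ (3 : ℝ) := by
      rw [show (3 : ℝ) = ((3 : ℕ) : ℝ) by norm_num, ENNReal.rpow_natCast, ← ENNReal.inv_pow]
      norm_num
    rw [h5, ← ENNReal.rpow_mul]
    exact ENNReal.rpow_le_rpow_of_exponent_ge (ENNReal.inv_le_one.2 (by norm_num)) (by linarith)

/-- The `p`-th moment of `Q`: above the level `M` of `MomentData.measure_tail`, the tails of `Q`
decay exponentially at the rate `p / M`. -/
lemma MomentData.moment [IsProbabilityMeasure μ] (h : MomentData μ φ Q r p A) :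
    ∫⁻ x, ENNReal.ofReal (Q x ^ p) ∂μ ≤
      ENNReal.ofReal ((589824 * (12 * 839808 ^ 8) * r * A) ^ p) := by
  have hr := h.one_le_r
  have hp := h.one_le_p
  have hA := h.A_pos
  have hr0 : 0 < r := by linarith
  have hp0 : 0 < p := by linarith
  obtain ⟨M, hM⟩ : ∃ M : ℝ, M = 3072 * r * (12 * 839808 ^ 8 * A) := ⟨_, rfl⟩
  have hM0 : 0 < M := by rw [hM]; positivity
  have htail := h.measure_tail hM
  have hcompl : μ {x | Q x ≤ M} + μ {x | M < Q x} = 1 := by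
    rw [← measure_univ (μ := μ), ← measure_add_measure_compl
      (measurableSet_le h.meas_Q measurable_const : MeasurableSet {x | Q x ≤ M})]
    congr 2
    ext x
    simp
  have hβ : μ {x | M < Q x} ≤ 4⁻¹ ^ p * μ {x | Q x ≤ M} := by
    set u := μ {x | Q x ≤ M}
    set v := μ {x | M < Q x}
    have h1 : (2⁻¹ : ℝ≥0∞) ≤ u := by
      have h2 : v ≤ 2⁻¹ := by
        refine htail.trans ?_
        calc (27⁻¹ : ℝ≥0∞) ^ p ≤ 27⁻¹ ^ (1 : ℝ) :=
              ENNReal.rpow_le_rpow_of_exponent_ge (ENNReal.inv_le_one.2 (by norm_num)) hp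
          _ ≤ 2⁻¹ := by
              rw [ENNReal.rpow_one]
              exact ENNReal.inv_le_inv.2 (by norm_num)
      by_contra! hcon
      have := ENNReal.add_lt_add_of_lt_of_le (by finiteness) hcon h2
      rw [hcompl, ENNReal.inv_two_add_inv_two] at this
      exact lt_irrefl _ this
    refine htail.trans ?_
    calc (27⁻¹ : ℝ≥0∞) ^ p ≤ (4⁻¹ * 2⁻¹) ^ p := by
          refine ENNReal.rpow_le_rpow ?_ hp0.le
          rw [← ENNReal.mul_inv (by norm_num) (by norm_num)]
          exact ENNReal.inv_le_inv.2 (by norm_num)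
      _ = 4⁻¹ ^ p * 2⁻¹ ^ p := ENNReal.mul_rpow_of_nonneg _ _ hp0.le
      _ ≤ 4⁻¹ ^ p * u := by
          refine mul_le_mul_right (le_trans ?_ h1) _
          calc (2⁻¹ : ℝ≥0∞) ^ p ≤ 2⁻¹ ^ (1 : ℝ) :=
              ENNReal.rpow_le_rpow_of_exponent_ge (ENNReal.inv_le_one.2 (by norm_num)) hp
            _ = 2⁻¹ := ENNReal.rpow_one _
  have hbor : ∀ t : ℝ, 1 ≤ t → μ {x | t * M < Q x} ≤ 2⁻¹ ^ (p * t) := by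
    intro t ht
    refine (h.lc.borell h.meas_Q h.Q_tri hM0.le hβ ht).trans ?_
    refine (mul_le_of_le_one_right' prob_le_one).trans ?_
    have h4 : (4⁻¹ : ℝ≥0∞) = 2⁻¹ ^ (2 : ℝ) := by
      rw [show (2 : ℝ) = ((2 : ℕ) : ℝ) by norm_num, ENNReal.rpow_natCast, ← ENNReal.inv_pow]
      norm_num
    rw [h4, ← ENNReal.rpow_mul, ← ENNReal.rpow_mul]
    refine ENNReal.rpow_le_rpow_of_exponent_ge (ENNReal.inv_le_one.2 (by norm_num)) ?_
    nlinarith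
  have hQi : ∀ i : ℤ, MeasurableSet {x | (2 : ℝ) ^ i ≤ Q x} := fun i =>
    measurableSet_le measurable_const h.meas_Q
  have key := tsum_dyadic_tail hp (m := 2 * M / p) (by positivity) 1
    (h := fun i : ℤ => μ {x | (2 : ℝ) ^ i ≤ Q x}) (fun i => prob_le_one) (by
      intro i hi
      have hi' : 2 * M ≤ 2 ^ i := by
        refine le_trans (le_of_eq ?_) hi
        field_simp
      set t : ℝ := 2 ^ i / (2 * M) with ht
      have ht1 : 1 ≤ t := by
        rw [ht, one_le_div (by positivity)]
        exact hi'
      refine (measure_mono (t := {x | t * M < Q x})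
        fun x (hx : (2 : ℝ) ^ i ≤ Q x) => ?_).trans ((hbor t ht1).trans_eq ?_)
      · show t * M < Q x
        refine lt_of_lt_of_le ?_ hx
        rw [ht]
        have : (0 : ℝ) < 2 ^ i := by positivity
        field_simp
        linarith
      · rw [mul_one, ← ENNReal.ofReal_rpow_of_pos (by norm_num), ENNReal.inv_rpow,
          ENNReal.rpow_neg, ENNReal.ofReal_ofNat]
        congr 2
        rw [ht]; field_simp)
  have h2 : ∀ i : ℤ, ENNReal.ofReal ((2 : ℝ) ^ (p * ((i : ℝ) + 1))) =
      ENNReal.ofReal (2 ^ p) * ENNReal.ofReal (2 ^ (p * i)) := by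
    intro i
    rw [← ENNReal.ofReal_mul (by positivity), ← Real.rpow_add (by norm_num)]
    ring_nf
  calc ∫⁻ x, ENNReal.ofReal (Q x ^ p) ∂μ
      ≤ ∫⁻ x, ∑' i : ℤ, ENNReal.ofReal (2 ^ (p * ((i : ℝ) + 1))) *
          {x | (2 : ℝ) ^ i ≤ Q x}.indicator (1 : E → ℝ≥0∞) x ∂μ := by
        refine lintegral_mono fun x => (rpow_le_tsum_dyadic (h.Q_nonneg x) hp0).trans ?_
        refine ENNReal.tsum_le_tsum fun i => ?_
        rw [Set.indicator_apply]
        rfl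
    _ = ∑' i : ℤ, ENNReal.ofReal (2 ^ (p * ((i : ℝ) + 1))) * μ {x | (2 : ℝ) ^ i ≤ Q x} := by
        rw [lintegral_tsum fun i =>
          ((measurable_one.indicator (hQi i)).const_mul _).aemeasurable]
        congr 1
        ext i
        rw [lintegral_const_mul _ (measurable_one.indicator (hQi i)),
          lintegral_indicator_one (hQi i)]
    _ ≤ ENNReal.ofReal (2 ^ p) * (ENNReal.ofReal ((48 * p * (2 * M / p)) ^ p) * 1) := by
        simp_rw [h2, mul_assoc]
        rw [ENNReal.tsum_mul_left]
        simp only [mul_assoc] at key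
        exact mul_le_mul_right key _
    _ = _ := by
        rw [mul_one, ← ENNReal.ofReal_mul (by positivity),
          ← Real.mul_rpow (by norm_num) (by positivity)]
        congr 2
        rw [hM]
        field_simp
        norm_num
end

/-! ### Embeddings into `ℓ_r` -/

/-- A log-concave law composed with an embedding into `ℓ_r` provides the data of `MomentData`. -/
lemma momentData_of_embedding {r p : ℝ} (hr : 1 ≤ r) (hp : 1 ≤ p) [Fact (1 ≤ ENNReal.ofReal r)]
    {F : Type*} [NormedAddCommGroup F] [NormedSpace ℝ F] [MeasurableSpace F] [BorelSpace F]
    [FiniteDimensional ℝ F] (i : F →L[ℝ] lp (fun _ : ℕ => ℝ) (ENNReal.ofReal r))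
    {μ : Measure F} [IsProbabilityMeasure μ] (hμ : IsLogConcave μ) {e S A : ℝ}
    (hS0 : 0 ≤ S) (he : ∫⁻ x, ENNReal.ofReal ‖x‖ ∂μ ≤ ENNReal.ofReal e)
    (hS : ∀ f : F →L[ℝ] ℝ, ‖f‖ ≤ 1 →
      ∫⁻ x, ENNReal.ofReal (|f x| ^ p) ∂μ ≤ ENNReal.ofReal (S ^ p))
    (hA : 0 < A) (hAe : ‖i‖ * e ≤ A) (hAS : ‖i‖ * S ≤ A) :
    MomentData μ (fun j => ((lp.evalCLM ℝ (fun _ : ℕ => ℝ) (ENNReal.ofReal r) j).comp i : F →ₗ[ℝ] ℝ))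
      (fun x => ‖i x‖) r p A where
  lc := hμ.lcMeas
  one_le_r := hr
  one_le_p := hp
  A_pos := hA
  meas_φ j := ((lp.evalCLM ℝ (fun _ : ℕ => ℝ) (ENNReal.ofReal r) j).comp i).continuous.measurable
  meas_Q := i.continuous.norm.measurable
  Q_nonneg x := norm_nonneg _
  Q_tri l hl0 hl1 x y := by
    have h1 : i (l • x + (1 - l) • y) = l • i x - -((1 - l) • i y) := by simp
    have h2 := norm_sub_norm_le (l • i x) (-((1 - l) • i y))
    rw [← h1, norm_neg, norm_smul, norm_smul, Real.norm_of_nonneg hl0.le,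
      Real.norm_of_nonneg (sub_pos.2 hl1).le] at h2
    exact h2
  hasSum x := by
    have hr' : (ENNReal.ofReal r).toReal = r := ENNReal.toReal_ofReal (by linarith)
    have := lp.hasSum_norm (by rw [hr']; linarith) (i x)
    rw [hr'] at this
    exact this
  mean := by
    calc ∫⁻ x, ENNReal.ofReal ‖i x‖ ∂μ
        ≤ ∫⁻ x, ENNReal.ofReal ‖i‖ * ENNReal.ofReal ‖x‖ ∂μ := by
          refine lintegral_mono fun x => ?_
          rw [← ENNReal.ofReal_mul (norm_nonneg _)]
          exact ENNReal.ofReal_le_ofReal (i.le_opNorm x)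
      _ = ENNReal.ofReal ‖i‖ * ∫⁻ x, ENNReal.ofReal ‖x‖ ∂μ :=
          lintegral_const_mul _ measurable_norm.ennreal_ofReal
      _ ≤ ENNReal.ofReal ‖i‖ * ENNReal.ofReal e := mul_le_mul_right he _
      _ ≤ ENNReal.ofReal A := by
          rw [← ENNReal.ofReal_mul (norm_nonneg _)]
          exact ENNReal.ofReal_le_ofReal hAe
  weak f _ hfQ := by
    have hp0 : 0 < p := by linarith
    have hfb : ∀ x, |f x| ≤ ‖i‖ * ‖x‖ := fun x => (hfQ x).trans (i.le_opNorm x)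
    rcases (norm_nonneg i).eq_or_lt with h0 | h0
    · have hz : ∀ x, f x = 0 := fun x => by
        have := hfb x
        rw [← h0, zero_mul] at this
        exact abs_nonpos_iff.1 this
      simp [hz, Real.zero_rpow hp0.ne']
    set f' : F →L[ℝ] ℝ := LinearMap.toContinuousLinearMap f with hf'
    have hf'n : ‖f'‖ ≤ ‖i‖ := f'.opNorm_le_bound (norm_nonneg _) hfb
    have h1 := hS (‖i‖⁻¹ • f') (by
      rw [norm_smul, norm_inv, norm_norm]
      exact (inv_mul_le_one₀ h0).2 hf'n)
    have h2 : ∀ x, ENNReal.ofReal (|f x| ^ p) =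
        ENNReal.ofReal (‖i‖ ^ p) * ENNReal.ofReal (|(‖i‖⁻¹ • f') x| ^ p) := by
      intro x
      rw [← ENNReal.ofReal_mul (by positivity), ← Real.mul_rpow h0.le (abs_nonneg _)]
      congr 2
      have h3 : (‖i‖⁻¹ • f') x = ‖i‖⁻¹ * f x := rfl
      rw [h3, abs_mul, abs_of_pos (inv_pos.2 h0), mul_inv_cancel_left₀ h0.ne']
    simp_rw [h2]
    rw [lintegral_const_mul _ (((‖i‖⁻¹ • f').continuous.measurable.abs.pow_const p).ennreal_ofReal)]
    refine (mul_le_mul_right h1 _).trans ?_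
    rw [← ENNReal.ofReal_mul (by positivity), ← Real.mul_rpow h0.le hS0]
    gcongr

/-- The norm of `x` is at most the distortion constant `⨆ ‖x‖ / ‖i x‖` times `‖i x‖`; the supremum
is finite because `F` is finite-dimensional. -/
lemma norm_le_iSup_mul {F G : Type*} [NormedAddCommGroup F] [NormedSpace ℝ F]
    [FiniteDimensional ℝ F] [NormedAddCommGroup G] [NormedSpace ℝ G] (i : F →L[ℝ] G)
    (hi : Function.Injective i) (x : F) :
    ‖x‖ ≤ (⨆ x : {x : F // x ≠ 0}, ‖x.1‖ / ‖i x.1‖) * ‖i x‖ := by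
  rcases eq_or_ne x 0 with rfl | hx
  · simp
  have hpos : ∀ y : F, y ≠ 0 → 0 < ‖i y‖ := fun y hy =>
    norm_pos_iff.2 fun h => hy (hi (by rw [h, map_zero]))
  obtain ⟨K, -, hK⟩ := (i : F →ₗ[ℝ] G).exists_antilipschitzWith (LinearMap.ker_eq_bot.2 hi)
  have hbdd : BddAbove (Set.range fun x : {x : F // x ≠ 0} => ‖x.1‖ / ‖i x.1‖) := by
    refine ⟨K, ?_⟩
    rintro _ ⟨⟨y, hy⟩, rfl⟩
    rw [div_le_iff₀ (hpos y hy)]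
    exact ZeroHomClass.bound_of_antilipschitz (i : F →ₗ[ℝ] G) hK y
  rw [← div_le_iff₀ (hpos x hx)]
  exact le_ciSup hbdd (⟨x, hx⟩ : {x : F // x ≠ 0})

/-- **Nonisometric-embedding form of Theorem 1.2.** There is a universal constant `C₂` such
that for every `r ∈ [1,∞)`, every finite-dimensional normed space `F`, every injective bounded
linear map `i : F → ℓ_r` with distortion `λ = ‖i‖ ⬝ ‖i⁻¹‖_{i(F)→F}` (the inverse operator norm
being `⨆_{x ≠ 0} ‖x‖/‖i x‖`), every log-concave random vector `X` in `F` and every `p ≥ 1`: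
`(E‖X‖^p)^{1/p} ≤ C₂ r λ (E‖X‖ + sup_{‖φ‖_* ≤ 1} (E|φ(X)|^p)^{1/p})`. -/
theorem moment_bound_nonisometric_embedding_lr :
    ∃ C₂ : ℝ, 0 < C₂ ∧
      ∀ (r : ℝ), 1 ≤ r → ∀ [Fact (1 ≤ ENNReal.ofReal r)],
      ∀ (F : Type) [NormedAddCommGroup F] [NormedSpace ℝ F] [MeasurableSpace F]
        [BorelSpace F], FiniteDimensional ℝ F →
      ∀ i : F →L[ℝ] lp (fun _ : ℕ => ℝ) (ENNReal.ofReal r), Function.Injective i →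
      ∀ (Ω : Type) [MeasureSpace Ω], IsProbabilityMeasure (ℙ : Measure Ω) →
      ∀ X : Ω → F, Measurable X → IsLogConcave (Measure.map X ℙ) →
      ∀ p : ℝ, 1 ≤ p →
        (∫ ω, ‖X ω‖ ^ p) ^ (1 / p) ≤
          C₂ * r * (‖i‖ * ⨆ x : {x : F // x ≠ 0}, ‖x.1‖ / ‖i x.1‖) *
            ((∫ ω, ‖X ω‖) +
              ⨆ φ : {φ : F →L[ℝ] ℝ // ‖φ‖ ≤ 1},
                (∫ ω, |φ.1 (X ω)| ^ p) ^ (1 / p)) := by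
  refine ⟨589824 * (12 * 839808 ^ 8), by norm_num, ?_⟩
  intro r hr _ F _ _ _ _ hF i hi Ω _ hΩ X hX hlc p hp
  have hp0 : 0 < p := by linarith
  have hr0 : 0 < r := by linarith
  obtain ⟨C, hC⟩ : ∃ C : ℝ, C = 589824 * (12 * 839808 ^ 8) := ⟨_, rfl⟩
  have hC0 : 0 < C := by rw [hC]; norm_num
  rw [← hC]
  set D := ⨆ x : {x : F // x ≠ 0}, ‖x.1‖ / ‖i x.1‖ with hD
  set e := ∫ ω, ‖X ω‖ with he
  set S := ⨆ φ : {φ : F →L[ℝ] ℝ // ‖φ‖ ≤ 1}, (∫ ω, |φ.1 (X ω)| ^ p) ^ (1 / p) with hS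
  have hD0 : 0 ≤ D := Real.iSup_nonneg fun x => by positivity
  have he0 : 0 ≤ e := integral_nonneg fun ω => norm_nonneg _
  have hI0 : ∀ f : Ω → ℝ, 0 ≤ ∫ ω, |f ω| ^ p := fun f => integral_nonneg fun ω => by positivity
  have hS0 : 0 ≤ S := Real.iSup_nonneg fun φ => by
    have := hI0 fun ω => φ.1 (X ω)
    positivity
  by_cases hint : Integrable (fun ω => ‖X ω‖ ^ p) ℙ
  swap
  · rw [integral_undef hint, Real.zero_rpow (by positivity)]
    positivity
  have hN0 : 0 ≤ ∫ ω, ‖X ω‖ ^ p := integral_nonneg fun ω => by positivity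
  have hint1 : Integrable (fun ω => ‖X ω‖) ℙ := by
    refine (hint.add (integrable_const (1 : ℝ))).mono' hX.norm.aestronglyMeasurable
      (Filter.Eventually.of_forall fun ω => ?_)
    rw [norm_norm]
    change ‖X ω‖ ≤ ‖X ω‖ ^ p + 1
    rcases le_total 1 ‖X ω‖ with h1 | h1
    · linarith [Real.self_le_rpow_of_one_le h1 hp]
    · linarith [Real.rpow_nonneg (norm_nonneg (X ω)) p]
  have hle : ∀ f : F →L[ℝ] ℝ, ‖f‖ ≤ 1 → ∀ ω, |f (X ω)| ^ p ≤ ‖X ω‖ ^ p := by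
    intro f hf ω
    have h1 := (f.le_opNorm (X ω)).trans (mul_le_of_le_one_left (norm_nonneg _) hf)
    exact Real.rpow_le_rpow (abs_nonneg _) h1 hp0.le
  have hintf : ∀ f : F →L[ℝ] ℝ, ‖f‖ ≤ 1 → Integrable (fun ω => |f (X ω)| ^ p) ℙ := by
    intro f hf
    refine hint.mono' ((f.continuous.measurable.comp hX).abs.pow_const p).aestronglyMeasurable
      (Filter.Eventually.of_forall fun ω => ?_)
    rw [Real.norm_of_nonneg (by positivity)]
    exact hle f hf ω
  have hbdd : BddAbove (Set.range fun φ : {φ : F →L[ℝ] ℝ // ‖φ‖ ≤ 1} =>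
      (∫ ω, |φ.1 (X ω)| ^ p) ^ (1 / p)) := by
    refine ⟨(∫ ω, ‖X ω‖ ^ p) ^ (1 / p), ?_⟩
    rintro _ ⟨⟨f, hf⟩, rfl⟩
    exact Real.rpow_le_rpow (hI0 fun ω => f (X ω))
      (integral_mono (hintf f hf) hint (hle f hf)) (by positivity)
  have : IsProbabilityMeasure (Measure.map X ℙ) := Measure.isProbabilityMeasure_map hX.aemeasurable
  have hmean : ∫⁻ x, ENNReal.ofReal ‖x‖ ∂(Measure.map X ℙ) ≤ ENNReal.ofReal e := by
    rw [lintegral_map measurable_norm.ennreal_ofReal hX, he,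
      ofReal_integral_eq_lintegral_ofReal hint1 (Filter.Eventually.of_forall fun ω => norm_nonneg _)]
  have hweak : ∀ f : F →L[ℝ] ℝ, ‖f‖ ≤ 1 →
      ∫⁻ x, ENNReal.ofReal (|f x| ^ p) ∂(Measure.map X ℙ) ≤ ENNReal.ofReal (S ^ p) := by
    intro f hf
    rw [lintegral_map ((f.continuous.measurable.abs.pow_const p).ennreal_ofReal) hX,
      ← ofReal_integral_eq_lintegral_ofReal (hintf f hf)
        (Filter.Eventually.of_forall fun ω => by positivity)]
    refine ENNReal.ofReal_le_ofReal ?_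
    have h1 := le_ciSup hbdd (⟨f, hf⟩ : {φ : F →L[ℝ] ℝ // ‖φ‖ ≤ 1})
    have h2 := Real.rpow_le_rpow (Real.rpow_nonneg (hI0 fun ω => f (X ω)) _) h1 hp0.le
    rwa [← Real.rpow_mul (hI0 fun ω => f (X ω)), one_div_mul_cancel hp0.ne', Real.rpow_one] at h2
  have key : ∀ ε : ℝ, 0 < ε →
      (∫ ω, ‖X ω‖ ^ p) ^ (1 / p) ≤ D * (C * r * (‖i‖ * (e + S) + ε)) := by
    intro ε hε
    set A := ‖i‖ * (e + S) + ε with hA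
    have hA0 : 0 < A := by positivity
    have h1 := momentData_of_embedding hr hp i hlc hS0 hmean hweak hA0
      (by rw [hA, mul_add]; linarith [mul_nonneg (norm_nonneg i) hS0])
      (by rw [hA, mul_add]; linarith [mul_nonneg (norm_nonneg i) he0])
    have h2 := h1.moment
    rw [← hC] at h2
    have hm : Measurable fun x : F => ENNReal.ofReal (‖i x‖ ^ p) :=
      (i.continuous.norm.measurable.pow_const p).ennreal_ofReal
    have h3 : ENNReal.ofReal (∫ ω, ‖X ω‖ ^ p) ≤ ENNReal.ofReal ((D * (C * r * A)) ^ p) := by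
      calc ENNReal.ofReal (∫ ω, ‖X ω‖ ^ p) = ∫⁻ ω, ENNReal.ofReal (‖X ω‖ ^ p) :=
            ofReal_integral_eq_lintegral_ofReal hint
              (Filter.Eventually.of_forall fun ω => by positivity)
        _ ≤ ∫⁻ ω, ENNReal.ofReal (D ^ p) * ENNReal.ofReal (‖i (X ω)‖ ^ p) := by
            refine lintegral_mono fun ω => ?_
            rw [← ENNReal.ofReal_mul (by positivity), ← Real.mul_rpow hD0 (norm_nonneg _)]
            exact ENNReal.ofReal_le_ofReal
              (Real.rpow_le_rpow (norm_nonneg _) (norm_le_iSup_mul i hi _) hp0.le)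
        _ = ENNReal.ofReal (D ^ p) * ∫⁻ x, ENNReal.ofReal (‖i x‖ ^ p) ∂(Measure.map X ℙ) := by
            rw [lintegral_map hm hX]
            exact lintegral_const_mul _ (hm.comp hX)
        _ ≤ ENNReal.ofReal (D ^ p) * ENNReal.ofReal ((C * r * A) ^ p) := mul_le_mul_right h2 _
        _ = _ := by
            rw [← ENNReal.ofReal_mul (by positivity), ← Real.mul_rpow hD0 (by positivity)]
    have h4 : ∫ ω, ‖X ω‖ ^ p ≤ (D * (C * r * A)) ^ p :=
      (ENNReal.ofReal_le_ofReal_iff (by positivity)).1 h3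
    have h5 := Real.rpow_le_rpow hN0 h4 (show 0 ≤ 1 / p by positivity)
    rwa [← Real.rpow_mul (by positivity), mul_one_div_cancel hp0.ne', Real.rpow_one] at h5
  refine le_of_forall_pos_le_add fun δ hδ => ?_
  have hden : 0 < D * (C * r) + 1 := by positivity
  refine (key (δ / (D * (C * r) + 1)) (by positivity)).trans ?_
  have h6 : D * (C * r) * (δ / (D * (C * r) + 1)) ≤ δ := by
    rw [mul_div_assoc', div_le_iff₀ hden]
    nlinarith
  calc _ = C * r * (‖i‖ * D) * (e + S) + D * (C * r) * (δ / (D * (C * r) + 1)) := by ring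
    _ ≤ _ := by linarith
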